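/- arXiv:math/0302037 — 3 statements merged into one kernel-verified Lean document; each statement's English description precedes it below -/
import Mathlib

section
/- For 0 ≤ l ≤ n one has X_n^{(l)} = {r_{i_1} r_{i_2} ⋯ r_{i_l} : 1 ≤ i_1 < i_2 < ⋯ < i_l ≤ n}; moreover ℓ(r_{i_1} r_{i_2} ⋯ r_{i_l}) = i_1 + i_2 + ⋯ + i_l for 1 ≤ i_1 < ⋯ < i_l ≤ n, and consequently |X_n^{(l)}| = C(n,l), the binomial coefficient n choose l. -/
open scoped Classical

noncomputable section

/-! ## The hyperoctahedral group `W_n` as signed permutations of `I_n ⊆ ℤ` -/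

abbrev P := Equiv.Perm ℤ

/-- `W_n` : permutations of `I_n = {±1, …, ±n}` commuting with `i ↦ -i`,
realized as permutations of `ℤ` fixing everything outside `I_n`. -/
def Wset (n : ℕ) : Set P :=
  {π | (∀ i : ℤ, π (-i) = - π i) ∧ ∀ i : ℤ, (n : ℤ) < |i| → π i = i}

/-- the generator `t = (1, -1)` -/
def tgen : P := Equiv.swap 1 (-1)

/-- the generator `s_i = (i, i+1)(-i, -(i+1))` -/
def sgen (i : ℕ) : P :=
  Equiv.swap (i : ℤ) ((i : ℤ) + 1) * Equiv.swap (-(i : ℤ)) (-((i : ℤ) + 1))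

/-- the generating set `S_n = {t, s_1, …, s_{n-1}}` -/
def Sset (n : ℕ) : Set P := insert tgen (sgen '' Set.Icc 1 (n - 1))

/-- the length function of `W_n` with respect to `S_n` -/
def len (n : ℕ) (w : P) : ℕ :=
  sInf {k | ∃ l : List P, (∀ g ∈ l, g ∈ Sset n) ∧ l.prod = w ∧ l.length = k}

/-- number of occurrences of `tgen` in a list -/
def tcount (l : List P) : ℕ := (l.map (fun g => if g = tgen then 1 else 0)).sum

/-- `ℓ_t(w)` : the number of occurrences of `t` in a (any) reduced expression of `w` -/
def tlen (n : ℕ) (w : P) : ℕ :=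
  sInf {k | ∃ l : List P, (∀ g ∈ l, g ∈ Sset n) ∧ l.prod = w ∧
    l.length = len n w ∧ tcount l = k}

/-- the Bruhat order on `W_n` : `x ≤ y` iff some reduced expression of `y`
has a subword whose product is `x`. -/
def bruhat (n : ℕ) (x y : P) : Prop :=
  ∃ l l' : List P, (∀ g ∈ l, g ∈ Sset n) ∧ l.prod = y ∧ l.length = len n y ∧
    List.Sublist l' l ∧ l'.prod = x

/-! ## Generalized Robinson–Schensted correspondence -/

abbrev Tab := List (List ℕ)

/-- row insertion of `x` into one row; returns the new row and the bumped entry (if any) -/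
def insRow (x : ℕ) : List ℕ → List ℕ × Option ℕ
  | [] => ([x], none)
  | y :: ys =>
    if x < y then (x :: ys, some y)
    else
      let p := insRow x ys
      (y :: p.1, p.2)

/-- Schensted insertion of `x` into a tableau; returns the new tableau
and the (row, column) coordinates of the newly created box. -/
def insTab (x : ℕ) : Tab → Tab × ℕ × ℕ
  | [] => ([[x]], 0, 0)
  | row :: rest =>
    let p := insRow x row
    match p.2 with
    | none => (p.1 :: rest, 0, row.length)
    | some b =>
      let q := insTab b rest
      (p.1 :: q.1, q.2.1 + 1, q.2.2)

/-- place the label `lbl` at the end of row `pos.1` of the recording tableau -/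
def place (lbl : ℕ) (pos : ℕ × ℕ) (T : Tab) : Tab :=
  if pos.1 < T.length then T.set pos.1 ((T.getD pos.1 []) ++ [lbl]) else T ++ [[lbl]]

/-- one step of the generalized RS algorithm: insert `|π(i)|` into `A⁺` or `A⁻`
according to the sign of `π(i)`, and record `i` in the corresponding `B`-tableau. -/
def RSstep (π : P) (st : (Tab × Tab) × (Tab × Tab)) (i : ℕ) : (Tab × Tab) × (Tab × Tab) :=
  let v := (π (i : ℤ)).natAbs
  if 0 < π (i : ℤ) then
    let p := insTab v st.1.1
    ((p.1, st.1.2), (place i p.2 st.2.1, st.2.2))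
  else
    let p := insTab v st.1.2
    ((st.1.1, p.1), (st.2.1, place i p.2 st.2.2))

def RSfull (n : ℕ) (π : P) : (Tab × Tab) × (Tab × Tab) :=
  (((List.range n).map (· + 1)).foldl (RSstep π)) ((([], []), ([], [])))

/-- the insertion bitableau `A_n(π) = (A⁺, A⁻)` -/
def Atab (n : ℕ) (π : P) : Tab × Tab := (RSfull n π).1

/-- the recording bitableau `B_n(π) = (B⁺, B⁻)` -/
def Btab (n : ℕ) (π : P) : Tab × Tab := (RSfull n π).2

/-- `T` is a standard Young tableau -/
def IsStdTab (T : Tab) : Prop :=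
  (∀ row ∈ T, row ≠ [] ∧ row.Chain' (· < ·)) ∧
  T.Chain' (fun r1 r2 => r2.length ≤ r1.length) ∧
  ∀ i j : ℕ, i + 1 < T.length → j < (T.getD (i + 1) []).length →
    (T.getD i []).getD j 0 < (T.getD (i + 1) []).getD j 0

/-- `(T₁, T₂)` is an `n`-standard bitableau: both standard, entry sets disjoint
with union `{1, …, n}` -/
def IsNStdBitab (n : ℕ) (p : Tab × Tab) : Prop :=
  IsStdTab p.1 ∧ IsStdTab p.2 ∧ (p.1.flatten ++ p.2.flatten).Perm (List.range' 1 n)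

/-- the shape of a bitableau -/
def shape2 (p : Tab × Tab) : List ℕ × List ℕ := (p.1.map List.length, p.2.map List.length)

/-! ## Knuth relations -/

/-- `t_i = (i, -i)` -/
def ttgen (i : ℕ) : P := Equiv.swap (i : ℤ) (-(i : ℤ))

/-- `S'_n = S_n ∪ {t_1, …, t_n}` -/
def Sprime (n : ℕ) : Set P := Sset n ∪ (ttgen '' Set.Icc 1 n)

/-- the extended left descent set `L'(w)` -/
def Ldesc (n : ℕ) (w : P) : Set P := {u ∈ Sprime n | len n (u * w) < len n w}

/-- the elementary relation `x —s→ y` -/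
def knuthStep (n : ℕ) (x y : P) : Prop :=
  ∃ i ∈ Set.Icc 1 (n - 1), y = sgen i * x ∧ len n x < len n y ∧
    ¬ (Ldesc n x ⊆ Ldesc n y)

/-- the relation `x ↔_L y` -/
def knuthRel (n : ℕ) : P → P → Prop :=
  Relation.ReflTransGen (fun a b => knuthStep n a b ∨ knuthStep n b a)

/-! ## Parabolic subgroups, coset representatives and the decomposition -/

/-- the parabolic subgroup `𝔖_n = ⟨s_1, …, s_{n-1}⟩` -/
def SymN (n : ℕ) : Subgroup P := Subgroup.closure (sgen '' Set.Icc 1 (n - 1))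

/-- the parabolic subgroup `𝔖_{l, n-l} = ⟨{s_1, …, s_{n-1}} \ {s_l}⟩` -/
def SymLR (n l : ℕ) : Subgroup P :=
  Subgroup.closure (sgen '' {i | 1 ≤ i ∧ i ≤ n - 1 ∧ i ≠ l})

/-- `Y_{l, n-l}` : minimal length representatives of left cosets of `𝔖_{l,n-l}` in `𝔖_n` -/
def Yset (n l : ℕ) : Set P :=
  {w | w ∈ SymN n ∧ ∀ u ∈ SymLR n l, len n w ≤ len n (w * u)}

/-- `X_n` : minimal length representatives of the left cosets `w 𝔖_n` in `W_n` -/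
def Xset (n : ℕ) : Set P :=
  {w | w ∈ Wset n ∧ ∀ u ∈ SymN n, len n w ≤ len n (w * u)}

/-- `X_n^{(l)}` -/
def Xl (n l : ℕ) : Set P := {w ∈ Xset n | tlen n w = l}

/-- `r_1 = t`, `r_{i+1} = s_i r_i` -/
def rgen : ℕ → P
  | 0 => 1
  | 1 => tgen
  | (i + 2) => sgen (i + 1) * rgen (i + 1)

/-- `a_l = r_1 r_2 ⋯ r_l` -/
def al (l : ℕ) : P := ((List.range l).map (fun k => rgen (k + 1))).prod

/-- the set `X_n^{(l)} ⬝ 𝔖_{l, n-l}` -/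
def XSset (n l : ℕ) : Set P := Set.image2 (· * ·) (Xl n l) (SymLR n l : Set P)

/-- `w = a ⬝ a_l ⬝ σ ⬝ b⁻¹` is the canonical decomposition of `w`
(with `a, b ∈ Y_{l,n-l}`, `σ ∈ 𝔖_{l,n-l}` and additivity of lengths) -/
def IsDecomp (n l : ℕ) (w a σ b : P) : Prop :=
  a ∈ Yset n l ∧ b ∈ Yset n l ∧ σ ∈ SymLR n l ∧ w = a * al l * σ * b⁻¹ ∧
    len n w = len n a + len n (al l) + len n σ + len n b

/-- the relation `w ⇝_L w'` -/
def squig (n : ℕ) (w w' : P) : Prop :=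
  ∃ l a σ b a' σ', tlen n w = l ∧ tlen n w' = l ∧
    IsDecomp n l w a σ b ∧ IsDecomp n l w' a' σ' b ∧ knuthRel n σ σ'

/-! ## The two-parameter Iwahori–Hecke algebra and Kazhdan–Lusztig data -/

/-- the ring `A = ℤ[V^{±1}, v^{±1}]`, as the group algebra of `Γ = ℤ × ℤ`
(a monomial `V^i v^j` corresponds to `(i,j) ∈ ℤ × ℤ`). -/
abbrev RR := AddMonoidAlgebra ℤ (ℤ × ℤ)

/-- the monomial with exponent `g` -/
def mono (g : ℤ × ℤ) : RR := AddMonoidAlgebra.single g 1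

/-- `Γ₋` for the lexicographic order with `V ≫ v`: `V^i v^j < 1` -/
def Gneg (g : ℤ × ℤ) : Prop := g.1 < 0 ∨ (g.1 = 0 ∧ g.2 < 0)

/-- an element of `ℤ[Γ₋]` : all monomials lie in `Γ₋` -/
def inNeg (f : RR) : Prop := ∀ g ∈ f.coeff.support, Gneg g

/-- the bar involution of `A`, `V ↦ V⁻¹`, `v ↦ v⁻¹` -/
def barR : RR → RR := fun f => AddMonoidAlgebra.ofCoeff (Finsupp.equivMapDomain (Equiv.neg (ℤ × ℤ)) f.coeff)

/-- the parameter `v_s` of a generator (`v_t = V`, `v_{s_i} = v`) -/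
def vgen (g : P) : RR := if g = tgen then mono (1, 0) else mono (0, 1)

/-- the inverse `v_s⁻¹` of the parameter of a generator -/
def vgenInv (g : P) : RR := if g = tgen then mono (-1, 0) else mono (0, -1)

/-- the free `A`-module with basis indexed by permutations; the Hecke algebra
`H_n` is carried by the elements supported on `W_n`. -/
abbrev HH := P →₀ RR

/-- the standard basis element `T_w` -/
def TT (w : P) : HH := Finsupp.single w 1

/-- All the data attached to the Iwahori–Hecke algebra `H_n` of `W_n` over
`A = ℤ[V^{±1}, v^{±1}]`: the multiplication, the bar involution, the
Kazhdan–Lusztig basis `C_w = Σ_y P*_{y,w} T_y` (for the order on `Γ` given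
by `Γ₊ = {V^i v^j : i > 0} ∪ {v^j : j > 0}`), and Lusztig's `M`-polynomials,
together with their defining properties. -/
structure KLData (n : ℕ) where
  mul : HH → HH → HH
  mul_add_left : ∀ a b c, mul (a + b) c = mul a c + mul b c
  mul_add_right : ∀ a b c, mul a (b + c) = mul a b + mul a c
  mul_smul_left : ∀ (r : RR) a b, mul (r • a) b = r • mul a b
  mul_smul_right : ∀ (r : RR) a b, mul a (r • b) = r • mul a b
  mul_assoc : ∀ a b c, mul (mul a b) c = mul a (mul b c)
  one_mul : ∀ a, mul (TT 1) a = a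
  mul_one : ∀ a, mul a (TT 1) = a
  /-- `T_w T_{w'} = T_{w w'}` when lengths add -/
  T_mul : ∀ w w', w ∈ Wset n → w' ∈ Wset n →
    len n (w * w') = len n w + len n w' → mul (TT w) (TT w') = TT (w * w')
  /-- the quadratic relations `T_s² = T_1 + (v_s - v_s⁻¹) T_s` -/
  T_sq : ∀ g ∈ Sset n, mul (TT g) (TT g) = TT 1 + (vgen g - vgenInv g) • TT g
  bar : HH → HH
  bar_add : ∀ a b, bar (a + b) = bar a + bar b
  bar_smul : ∀ (r : RR) a, bar (r • a) = barR r • bar a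
  bar_mul : ∀ a b, bar (mul a b) = mul (bar a) (bar b)
  /-- `bar T_s = T_s⁻¹ = T_s + (v_s⁻¹ - v_s) T_1` -/
  bar_gen : ∀ g ∈ Sset n, bar (TT g) = TT g + (vgenInv g - vgen g) • TT 1
  /-- the Kazhdan–Lusztig basis element `C_w`, whose coordinate at `T_y` is
  the polynomial `P*_{y,w}` -/
  C : P → HH
  /-- `P*_{w,w} = 1` -/
  C_self : ∀ w, C w w = 1
  /-- `P*_{y,w} = 0` unless `y ≤ w` -/
  C_supp : ∀ w y, C w y ≠ 0 → bruhat n y w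
  /-- `P*_{y,w} ∈ ℤ[Γ₋]` for `y < w` -/
  C_neg : ∀ w y, y ≠ w → inNeg (C w y)
  /-- `C_w` is bar-invariant -/
  C_bar : ∀ w, w ∈ Wset n → bar (C w) = C w
  /-- `M s w` is the finitely supported family `z ↦ M^s_{z,w}` -/
  M : P → P → (P →₀ RR)
  M_supp : ∀ s w z, (M s w) z ≠ 0 → bruhat n z w ∧ z ≠ w ∧ len n (s * z) < len n z
  /-- the symmetry condition `bar M^s_{y,w} = M^s_{y,w}` -/
  M_bar : ∀ s w z, barR ((M s w) z) = (M s w) z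
  /-- the condition `M^s_{y,w} + Σ_{y<z<w, sz<z} P*_{y,z} M^s_{z,w} - v_s P*_{y,w} ∈ ℤ[Γ₋]` -/
  M_cond : ∀ s ∈ Sset n, ∀ y w, len n (s * y) < len n y → len n w < len n (s * w) →
    bruhat n y w → y ≠ w →
    inNeg ((M s w) y + (M s w).sum (fun z m => if z = y then 0 else C z y * m)
      - vgen s * C w y)
  /-- `C_s C_w = C_{sw} + Σ_{z<w, sz<z} M^s_{z,w} C_z` when `sw > w` -/
  mulC_up : ∀ s ∈ Sset n, ∀ w ∈ Wset n, len n w < len n (s * w) →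
    mul (C s) (C w) = C (s * w) + (M s w).sum (fun z m => m • C z)
  /-- `C_s C_w = (v_s + v_s⁻¹) C_w` when `sw < w` -/
  mulC_down : ∀ s ∈ Sset n, ∀ w ∈ Wset n, len n (s * w) < len n w →
    mul (C s) (C w) = (vgen s + vgenInv s) • C w

/-- `P_{y,w} = v_y⁻¹ v_w P*_{y,w}` -/
def Ppoly (n : ℕ) (D : KLData n) (y w : P) : RR :=
  mono ((tlen n w : ℤ) - (tlen n y : ℤ),
        ((len n w : ℤ) - (tlen n w : ℤ)) - ((len n y : ℤ) - (tlen n y : ℤ))) * D.C w y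

/-- the `R`-polynomials : `bar T_w = Σ_y R_{y,w} T_y` -/
def Rpoly {n : ℕ} (D : KLData n) (y w : P) : RR := (D.bar (TT w)) y

/-- `y ≤_{L,s} w` : `C_y` occurs with non-zero coefficient in `C_s C_w`
(expressed in the `C`-basis), for some `s ∈ S_n`, `y ≠ w` -/
def leLelem {n : ℕ} (D : KLData n) (y w : P) : Prop :=
  ∃ s ∈ Sset n, len n w < len n (s * w) ∧ (y = s * w ∨ (D.M s w) y ≠ 0)

/-- the preorder `≤_L` -/
def leL {n : ℕ} (D : KLData n) : P → P → Prop := Relation.ReflTransGen (leLelem D)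

/-- the equivalence `∼_L`; its classes are the left cells -/
def simL {n : ℕ} (D : KLData n) (y w : P) : Prop := leL D y w ∧ leL D w y

/-- `f` is a polynomial in `q = v²` -/
def isPolyInQ (f : RR) : Prop := ∀ g ∈ f.coeff.support, g.1 = 0 ∧ 0 ≤ g.2 ∧ 2 ∣ g.2

end

/-! Let `A(w)` be the set of those `a ∈ {1, …, n}` with `w⁻¹ a < 0`. As `𝔖_n` consists of the
sign-preserving elements of `W_n`, two elements of `W_n` lie in the same coset of `𝔖_n` exactly
when they have the same `A`. Left multiplication by `t` toggles the membership of `1` in `A(w)`,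
and left multiplication by `s_i` exchanges `i` and `i + 1` in `A(w)`, so `ℓ(w)` is at least the sum
of `A(w)`. The product `r_{i_1} ⋯ r_{i_l}` has `A = {i_1, …, i_l}` and an evident word of
length `i_1 + ⋯ + i_l`, so it attains this bound and is of minimal length in its coset. Conversely,
in a word that attains the bound every letter raises the sum, and a letter that raises the sum
turns an increasing product of `r_i`s into another one, which has one more factor if the letter is
`t` and as many factors otherwise. -/

/-! ### Signed permutations -/

theorem tgen_apply (x : ℤ) : tgen x = if x = 1 then -1 else if x = -1 then 1 else x := by
  rw [tgen, Equiv.swap_apply_def]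

theorem sgen_apply {k : ℕ} (hk : 1 ≤ k) (x : ℤ) : sgen k x =
    if x = k then (k : ℤ) + 1 else if x = k + 1 then (k : ℤ)
    else if x = -k then -((k : ℤ) + 1) else if x = -(k + 1) then -(k : ℤ) else x := by
  rw [sgen, Equiv.Perm.mul_apply, Equiv.swap_apply_def, Equiv.swap_apply_def]
  grind

theorem sgen_apply_natCast {k : ℕ} (hk : 1 ≤ k) (a : ℕ) :
    sgen k a = (Equiv.swap k (k + 1) a : ℕ) := by
  rw [sgen_apply hk, Equiv.swap_apply_def]
  grind

theorem tgen_inv : tgen⁻¹ = tgen := Equiv.swap_inv 1 (-1)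

theorem sgen_inv {k : ℕ} (hk : 1 ≤ k) : (sgen k)⁻¹ = sgen k := by
  refine inv_eq_of_mul_eq_one_left (Equiv.ext fun x => ?_)
  rw [Equiv.Perm.mul_apply, sgen_apply hk, sgen_apply hk, Equiv.Perm.one_apply]
  grind

theorem sgen_ne_tgen {k : ℕ} (hk : 1 ≤ k) : sgen k ≠ tgen := by
  intro h
  have h1 := congrArg (· (1 : ℤ)) h
  simp only [sgen_apply hk, tgen_apply] at h1
  grind

/-- `W_n` as a subgroup of the permutations of `ℤ`. -/
def signedPerm (n : ℕ) : Subgroup P where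
  carrier := Wset n
  one_mem' := by simp [Wset]
  mul_mem' {v w} hv hw :=
    ⟨fun i => by rw [Equiv.Perm.mul_apply, hw.1, hv.1, Equiv.Perm.mul_apply],
      fun i hi => by rw [Equiv.Perm.mul_apply, hw.2 i hi, hv.2 i hi]⟩
  inv_mem' {w} hw :=
    ⟨fun i => by rw [Equiv.Perm.inv_eq_iff_eq, hw.1, Equiv.Perm.coe_inv, Equiv.apply_symm_apply],
      fun i hi => by rw [Equiv.Perm.inv_eq_iff_eq, hw.2 i hi]⟩

namespace signedPerm

variable {n : ℕ} {w : P}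

theorem apply_neg (hw : w ∈ signedPerm n) (x : ℤ) : w (-x) = -w x := hw.1 x

theorem apply_of_lt_abs (hw : w ∈ signedPerm n) {x : ℤ} (hx : n < |x|) : w x = x := hw.2 x hx

theorem apply_zero (hw : w ∈ signedPerm n) : w 0 = 0 := by
  have := apply_neg hw 0
  rw [neg_zero] at this
  lia

theorem apply_ne_zero (hw : w ∈ signedPerm n) {x : ℤ} (hx : x ≠ 0) : w x ≠ 0 :=
  fun h => hx (w.injective (h.trans (apply_zero hw).symm))

theorem abs_apply_le (hw : w ∈ signedPerm n) {x : ℤ} (hx : |x| ≤ n) : |w x| ≤ n := by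
  by_contra! h
  rw [w.injective (apply_of_lt_abs hw h)] at h
  exact h.not_ge hx

theorem zero_eq_bot : signedPerm 0 = ⊥ := by
  refine (Subgroup.eq_bot_iff_forall _).2 fun w hw => Equiv.ext fun x => ?_
  obtain rfl | hx := eq_or_ne x 0
  · exact apply_zero hw
  · exact apply_of_lt_abs hw (by simpa using hx)

theorem mem_of_apply_eq (hw : w ∈ signedPerm (n + 1)) (hfix : w (n + 1) = n + 1) :
    w ∈ signedPerm n := by
  refine ⟨hw.1, fun i hi => ?_⟩
  have hneg := apply_neg hw (n + 1)
  by_cases h : ((n + 1 : ℕ) : ℤ) < |i|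
  · exact apply_of_lt_abs hw h
  · obtain rfl | rfl : i = n + 1 ∨ i = -(n + 1) := by grind
    · exact hfix
    · rw [hneg, hfix]

theorem tgen_mem (hn : 1 ≤ n) : tgen ∈ signedPerm n :=
  ⟨fun i => by grind [tgen_apply], fun i hi => by grind [tgen_apply]⟩

theorem sgen_mem {k : ℕ} (hk : k ∈ Set.Icc 1 (n - 1)) : sgen k ∈ signedPerm n := by
  rw [Set.mem_Icc] at hk
  exact ⟨fun i => by grind [sgen_apply hk.1], fun i hi => by grind [sgen_apply hk.1]⟩

theorem of_mem_Sset (hn : 1 ≤ n) {g : P} (hg : g ∈ Sset n) : g ∈ signedPerm n := by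
  obtain rfl | ⟨k, hk, rfl⟩ := hg
  · exact tgen_mem hn
  · exact sgen_mem hk

theorem prod_mem_of_word (hn : 1 ≤ n) {l : List P} (hl : ∀ g ∈ l, g ∈ Sset n) :
    l.prod ∈ signedPerm n :=
  list_prod_mem fun g hg => of_mem_Sset hn (hl g hg)

end signedPerm

/-! ### The parabolic subgroup `𝔖_n` -/

section SymN

variable {m n : ℕ} {u : P}

theorem sgen_mem_SymN {k : ℕ} (hk : k ∈ Set.Icc 1 (n - 1)) : sgen k ∈ SymN n :=
  Subgroup.subset_closure (Set.mem_image_of_mem _ hk)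

theorem SymN_mono (hmn : m ≤ n) : SymN m ≤ SymN n :=
  Subgroup.closure_mono (Set.image_mono (Set.Icc_subset_Icc_right (by lia)))

theorem SymN_le_signedPerm : SymN n ≤ signedPerm n := by
  rw [SymN, Subgroup.closure_le]
  rintro _ ⟨k, hk, rfl⟩
  exact signedPerm.sgen_mem hk

theorem apply_neg_iff_of_mem_SymN (hu : u ∈ SymN n) : ∀ x, u x < 0 ↔ x < 0 := by
  induction hu using Subgroup.closure_induction with
  | mem _ hg =>
    obtain ⟨k, hk, rfl⟩ := hg
    intro x
    rw [sgen_apply hk.1]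
    grind
  | one => simp
  | mul u v _ _ hu hv => exact fun x => (hu _).trans (hv x)
  | inv u _ hu => exact fun x => by rw [← hu, Equiv.Perm.coe_inv, Equiv.apply_symm_apply]

theorem exists_mem_SymN_apply_eq (hm : 1 ≤ m) (hmn : m ≤ n) :
    ∃ c ∈ SymN n, c n = m := by
  refine Nat.decreasingInduction' (P := fun m => ∃ c ∈ SymN n, c n = m) ?_ hmn ⟨1, one_mem _, rfl⟩
  rintro k hkn hmk ⟨c, hc, hcn⟩
  refine ⟨sgen k * c, mul_mem (sgen_mem_SymN ⟨by lia, by lia⟩) hc, ?_⟩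
  rw [Equiv.Perm.mul_apply, hcn, sgen_apply_natCast (by lia), Equiv.swap_apply_right]

theorem mem_SymN_of_apply_neg_iff (hu : u ∈ signedPerm n) (hsign : ∀ x, u x < 0 ↔ x < 0) :
    u ∈ SymN n := by
  induction n generalizing u with
  | zero =>
    rw [signedPerm.zero_eq_bot, Subgroup.mem_bot] at hu
    exact hu ▸ one_mem _
  | succ n ih =>
    have hinv := inv_mem hu
    obtain ⟨m, hm⟩ : ∃ m : ℕ, u⁻¹ (n + 1) = m := by
      refine Int.eq_ofNat_of_zero_le (not_lt.1 fun h => ?_)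
      rw [← hsign, Equiv.Perm.coe_inv, Equiv.apply_symm_apply] at h
      lia
    have hm_ne : (m : ℤ) ≠ 0 := hm ▸ signedPerm.apply_ne_zero hinv (by lia)
    have hm_le : |(m : ℤ)| ≤ (n + 1 : ℕ) := hm ▸ signedPerm.abs_apply_le hinv (by grind)
    obtain ⟨c, hc, hcn⟩ := exists_mem_SymN_apply_eq (n := n + 1) (m := m) (by lia) (by grind)
    have hfix : (u * c) (n + 1) = n + 1 := by
      rw [Equiv.Perm.mul_apply, ← Nat.cast_succ, hcn, ← hm, Equiv.Perm.coe_inv,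
        Equiv.apply_symm_apply, Nat.cast_succ]
    have huc : u * c ∈ SymN n :=
      ih (signedPerm.mem_of_apply_eq (mul_mem hu (SymN_le_signedPerm hc)) hfix)
        fun x => (hsign _).trans (apply_neg_iff_of_mem_SymN hc x)
    exact (Subgroup.mul_mem_cancel_right _ hc).1 (SymN_mono n.le_succ huc)

end SymN

/-! ### Positive numbers with a negative preimage -/

/-- The set `A(w)` of the `a ∈ {1, …, n}` whose preimage under `w` is negative, that is, of the
absolute values of the negative entries of the window `w(1), …, w(n)` if `w ∈ W_n`. It is the
invariant that separates the cosets `w 𝔖_n`. -/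
def negValues (n : ℕ) (w : P) : Finset ℕ := {a ∈ Finset.Icc 1 n | w⁻¹ (a : ℤ) < 0}

section negValues

variable {n : ℕ} {w v : P}

theorem mem_negValues {a : ℕ} : a ∈ negValues n w ↔ (1 ≤ a ∧ a ≤ n) ∧ w⁻¹ (a : ℤ) < 0 := by
  rw [negValues, Finset.mem_filter, Finset.mem_Icc]

theorem negValues_subset : negValues n w ⊆ Finset.Icc 1 n := Finset.filter_subset _ _

theorem negValues_one : negValues n 1 = ∅ := by
  ext a
  simp [mem_negValues]

theorem negValues_mul_of_mem_SymN {u : P} (hu : u ∈ SymN n) :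
    negValues n (w * u) = negValues n w := by
  ext a
  rw [mem_negValues, mem_negValues, mul_inv_rev, Equiv.Perm.mul_apply,
    apply_neg_iff_of_mem_SymN (inv_mem hu)]

theorem inv_apply_neg_iff_of_negValues_eq (hw : w ∈ signedPerm n) (hv : v ∈ signedPerm n)
    (h : negValues n w = negValues n v) (x : ℤ) : w⁻¹ x < 0 ↔ v⁻¹ x < 0 := by
  have hw' := inv_mem hw
  have hv' := inv_mem hv
  have hnat (a : ℕ) (ha : 1 ≤ a) : w⁻¹ (a : ℤ) < 0 ↔ v⁻¹ (a : ℤ) < 0 := by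
    by_cases han : a ≤ n
    · have := congrArg (a ∈ ·) h
      simpa only [mem_negValues, ha, han, true_and, eq_iff_iff] using this
    · have hlt : (n : ℤ) < |(a : ℤ)| := by grind
      rw [signedPerm.apply_of_lt_abs hw' hlt, signedPerm.apply_of_lt_abs hv' hlt]
  obtain ⟨a, rfl | rfl⟩ := x.eq_nat_or_neg <;> obtain rfl | ha := a.eq_zero_or_pos
  · simp [signedPerm.apply_zero hw', signedPerm.apply_zero hv']
  · exact hnat a ha
  · simp [signedPerm.apply_zero hw', signedPerm.apply_zero hv']
  · have hwa : w⁻¹ (a : ℤ) ≠ 0 := signedPerm.apply_ne_zero hw' (by lia)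
    have hva : v⁻¹ (a : ℤ) ≠ 0 := signedPerm.apply_ne_zero hv' (by lia)
    rw [signedPerm.apply_neg hw', signedPerm.apply_neg hv']
    have := hnat a ha
    lia

theorem inv_mul_mem_SymN_of_negValues_eq (hw : w ∈ signedPerm n) (hv : v ∈ signedPerm n)
    (h : negValues n w = negValues n v) : w⁻¹ * v ∈ SymN n := by
  refine mem_SymN_of_apply_neg_iff (mul_mem (inv_mem hw) hv) fun x => ?_
  rw [Equiv.Perm.mul_apply, inv_apply_neg_iff_of_negValues_eq hw hv h, Equiv.Perm.coe_inv,
    Equiv.symm_apply_apply]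

theorem negValues_tgen_mul (hn : 1 ≤ n) (hw : w ∈ signedPerm n) :
    negValues n (tgen * w) =
      if 1 ∈ negValues n w then (negValues n w).erase 1 else insert 1 (negValues n w) := by
  have hneg := signedPerm.apply_neg (inv_mem hw) 1
  have hne := signedPerm.apply_ne_zero (inv_mem hw) one_ne_zero
  ext a
  have ha : (tgen * w)⁻¹ (a : ℤ) = if a = 1 then w⁻¹ (-1) else w⁻¹ (a : ℤ) := by
    rw [mul_inv_rev, tgen_inv, Equiv.Perm.mul_apply, tgen_apply]
    grind
  split_ifs <;> grind [mem_negValues, Nat.cast_one]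

theorem negValues_sgen_mul {k : ℕ} (hk : k ∈ Set.Icc 1 (n - 1)) :
    negValues n (sgen k * w) = (negValues n w).map (Equiv.swap k (k + 1)).toEmbedding := by
  ext a
  rw [Finset.mem_map_equiv, Equiv.symm_swap, mem_negValues, mem_negValues, mul_inv_rev,
    sgen_inv hk.1, Equiv.Perm.mul_apply, sgen_apply_natCast hk.1, Equiv.swap_apply_def]
  grind

end negValues

theorem sum_map_swap_succ_add (A : Finset ℕ) (k : ℕ) :
    ∑ a ∈ A.map (Equiv.swap k (k + 1)).toEmbedding, a + (if k + 1 ∈ A then 1 else 0) =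
      ∑ a ∈ A, a + if k ∈ A then 1 else 0 := by
  rw [Finset.sum_map, ← Finset.sum_ite_eq' A k fun _ => 1,
    ← Finset.sum_ite_eq' A (k + 1) fun _ => 1, ← Finset.sum_add_distrib, ← Finset.sum_add_distrib]
  refine Finset.sum_congr rfl fun a _ => ?_
  rw [Equiv.toEmbedding_apply, Equiv.swap_apply_def]
  grind

section SumNegValues

variable {n : ℕ} {w g : P}

theorem sum_negValues_tgen_mul (hn : 1 ≤ n) (hw : w ∈ signedPerm n) :
    ∑ a ∈ negValues n (tgen * w), a + (if 1 ∈ negValues n w then 1 else 0) =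
      ∑ a ∈ negValues n w, a + if 1 ∈ negValues n w then 0 else 1 := by
  rw [negValues_tgen_mul hn hw]
  split_ifs with h
  · exact Finset.sum_erase_add _ _ h
  · rw [Finset.sum_insert h, add_comm 1, add_zero]

theorem sum_negValues_sgen_mul {k : ℕ} (hk : k ∈ Set.Icc 1 (n - 1)) :
    ∑ a ∈ negValues n (sgen k * w), a + (if k + 1 ∈ negValues n w then 1 else 0) =
      ∑ a ∈ negValues n w, a + if k ∈ negValues n w then 1 else 0 := by
  rw [negValues_sgen_mul hk, sum_map_swap_succ_add]

theorem sum_negValues_mul_le (hn : 1 ≤ n) (hg : g ∈ Sset n) (hw : w ∈ signedPerm n) :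
    ∑ a ∈ negValues n (g * w), a ≤ ∑ a ∈ negValues n w, a + 1 := by
  obtain rfl | ⟨k, hk, rfl⟩ := hg
  · have := sum_negValues_tgen_mul hn hw
    split_ifs at this <;> lia
  · have := sum_negValues_sgen_mul (w := w) hk
    split_ifs at this <;> lia

theorem sum_negValues_prod_le_length (hn : 1 ≤ n) {l : List P} (hl : ∀ g ∈ l, g ∈ Sset n) :
    ∑ a ∈ negValues n l.prod, a ≤ l.length := by
  induction l with
  | nil => simp [negValues_one]
  | cons g l ih =>
    rw [List.forall_mem_cons] at hl
    calc ∑ a ∈ negValues n (g :: l).prod, a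
      _ ≤ ∑ a ∈ negValues n l.prod, a + 1 := by
          rw [List.prod_cons]
          exact sum_negValues_mul_le hn hl.1 (signedPerm.prod_mem_of_word hn hl.2)
      _ ≤ (g :: l).length := Nat.succ_le_succ (ih hl.2)

end SumNegValues

/-! ### Increasing products of the `r_i` -/

/-- `L` lists indices `1 ≤ i_1 < ⋯ < i_l ≤ n`, as in the products `r_{i_1} ⋯ r_{i_l}`. -/
def IsIndexList (n : ℕ) (L : List ℕ) : Prop := L.Pairwise (· < ·) ∧ ∀ i ∈ L, 1 ≤ i ∧ i ≤ n

section IndexList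

variable {n : ℕ} {L : List ℕ}

theorem isIndexList_nil : IsIndexList n [] := ⟨List.Pairwise.nil, by simp⟩

theorem isIndexList_cons {i : ℕ} :
    IsIndexList n (i :: L) ↔ (∀ a ∈ L, i < a) ∧ (1 ≤ i ∧ i ≤ n) ∧ IsIndexList n L := by
  rw [IsIndexList, List.pairwise_cons, List.forall_mem_cons, IsIndexList]
  tauto

theorem IsIndexList.map_swap_succ (hL : IsIndexList n L) {k : ℕ} (hk : k ∈ Set.Icc 1 (n - 1))
    (hkL : k + 1 ∉ L) : IsIndexList n (L.map (Equiv.swap k (k + 1))) := by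
  constructor
  · refine List.pairwise_map.2 (hL.1.imp_of_mem fun {a b} ha hb hab => ?_)
    have ha' : a ≠ k + 1 := ne_of_mem_of_not_mem ha hkL
    have hb' : b ≠ k + 1 := ne_of_mem_of_not_mem hb hkL
    rw [Equiv.swap_apply_def, Equiv.swap_apply_def]
    grind
  · refine List.forall_mem_map.2 fun a ha => ?_
    have := hL.2 a ha
    rw [Equiv.swap_apply_def]
    grind

theorem IsIndexList.card_toFinset (hL : IsIndexList n L) : L.toFinset.card = L.length :=
  List.toFinset_card_of_nodup hL.1.nodup

theorem IsIndexList.sum_toFinset (hL : IsIndexList n L) : ∑ a ∈ L.toFinset, a = L.sum := by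
  rw [List.sum_toFinset _ hL.1.nodup, List.map_id']

theorem exists_isIndexList_toFinset_eq {A : Finset ℕ} (hA : A ⊆ Finset.Icc 1 n) :
    ∃ L, IsIndexList n L ∧ L.toFinset = A :=
  ⟨A.sort, ⟨A.sortedLT_sort.pairwise,
    fun _ hi => Finset.mem_Icc.1 (hA ((Finset.mem_sort _).1 hi))⟩, A.sort_toFinset _⟩

theorem rgen_succ {i : ℕ} (hi : 1 ≤ i) : rgen (i + 1) = sgen i * rgen i := by
  obtain ⟨j, rfl⟩ := Nat.exists_eq_add_of_le' hi
  rfl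

theorem exists_word_prod_eq_rgen {i : ℕ} (hi : i ≤ n) :
    ∃ l : List P, (∀ g ∈ l, g ∈ Sset n) ∧ l.prod = rgen i ∧ l.length = i := by
  induction i using rgen.induct with
  | case1 => exact ⟨[], by simp, rfl, rfl⟩
  | case2 => exact ⟨[tgen], by simp [Sset], List.prod_singleton, rfl⟩
  | case3 i ih =>
    obtain ⟨l, hl, hprod, hlen⟩ := ih (by lia)
    have hs : sgen (i + 1) ∈ Sset n := .inr ⟨i + 1, ⟨by lia, by lia⟩, rfl⟩
    exact ⟨sgen (i + 1) :: l, List.forall_mem_cons.2 ⟨hs, hl⟩,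
      by rw [List.prod_cons, hprod, rgen], by rw [List.length_cons, hlen]⟩

theorem exists_word_prod_eq_prod_rgen (hL : ∀ i ∈ L, i ≤ n) :
    ∃ l : List P, (∀ g ∈ l, g ∈ Sset n) ∧ l.prod = (L.map rgen).prod ∧ l.length = L.sum := by
  induction L with
  | nil => exact ⟨[], by simp, rfl, rfl⟩
  | cons i L ih =>
    rw [List.forall_mem_cons] at hL
    obtain ⟨l₁, hl₁, hprod₁, hlen₁⟩ := exists_word_prod_eq_rgen hL.1
    obtain ⟨l₂, hl₂, hprod₂, hlen₂⟩ := ih hL.2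
    exact ⟨l₁ ++ l₂, List.forall_mem_append.2 ⟨hl₁, hl₂⟩,
      by rw [List.prod_append, hprod₁, hprod₂, List.map_cons, List.prod_cons],
      by rw [List.length_append, hlen₁, hlen₂, List.sum_cons]⟩

theorem IsIndexList.prod_rgen_mem (hn : 1 ≤ n) (hL : IsIndexList n L) :
    (L.map rgen).prod ∈ signedPerm n := by
  obtain ⟨l, hl, hprod, -⟩ := exists_word_prod_eq_prod_rgen fun i hi => (hL.2 i hi).2
  exact hprod ▸ signedPerm.prod_mem_of_word hn hl

theorem negValues_rgen_mul {w : P} (hw : w ∈ signedPerm n) {i : ℕ} (hi : 1 ≤ i) (hin : i ≤ n)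
    (hlt : ∀ a ∈ negValues n w, i < a) :
    negValues n (rgen i * w) = insert i (negValues n w) := by
  induction i, hi using Nat.le_induction with
  | base => rw [rgen, negValues_tgen_mul hin hw, if_neg fun h => (hlt 1 h).false]
  | succ i hi ih =>
    rw [rgen_succ hi, mul_assoc, negValues_sgen_mul ⟨hi, by lia⟩,
      ih (by lia) fun a ha => (Nat.lt_succ_self i).trans (hlt a ha)]
    ext a
    rw [Finset.mem_map_equiv, Equiv.symm_swap, Equiv.swap_apply_def]
    grind

theorem IsIndexList.negValues_prod_rgen (hn : 1 ≤ n) (hL : IsIndexList n L) :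
    negValues n (L.map rgen).prod = L.toFinset := by
  induction L with
  | nil => exact negValues_one
  | cons i L ih =>
    obtain ⟨hlt, hi, hL'⟩ := isIndexList_cons.1 hL
    rw [List.map_cons, List.prod_cons, List.toFinset_cons, ← ih hL']
    exact negValues_rgen_mul (hL'.prod_rgen_mem hn) hi.1 hi.2 (by simpa [ih hL'] using hlt)

theorem IsIndexList.sum_negValues_prod_rgen (hn : 1 ≤ n) (hL : IsIndexList n L) :
    ∑ a ∈ negValues n (L.map rgen).prod, a = L.sum := by
  rw [hL.negValues_prod_rgen hn, hL.sum_toFinset]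

theorem commute_sgen_sgen {j k : ℕ} (hj : 1 ≤ j) (hjk : j + 2 ≤ k) :
    Commute (sgen k) (sgen j) := by
  refine Equiv.Perm.Disjoint.commute fun x => ?_
  rw [sgen_apply hj, sgen_apply (by lia)]
  grind

theorem commute_sgen_tgen {k : ℕ} (hk : 2 ≤ k) : Commute (sgen k) tgen := by
  refine Equiv.Perm.Disjoint.commute fun x => ?_
  rw [tgen_apply, sgen_apply (by lia)]
  grind

theorem commute_sgen_rgen {i k : ℕ} (hik : i < k) : Commute (sgen k) (rgen i) := by
  induction i using rgen.induct with
  | case1 => exact Commute.one_right _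
  | case2 => exact commute_sgen_tgen hik
  | case3 i ih => exact (commute_sgen_sgen (by lia) (by lia)).mul_right (ih (by lia))

theorem sgen_mul_prod_rgen (hL : L.Pairwise (· < ·)) {k : ℕ} (hk : 1 ≤ k) (hmem : k ∈ L)
    (hnotMem : k + 1 ∉ L) :
    sgen k * (L.map rgen).prod = ((L.map (Equiv.swap k (k + 1))).map rgen).prod := by
  induction L with
  | nil => simp at hmem
  | cons i L ih =>
    obtain ⟨hlt, hL'⟩ := List.pairwise_cons.1 hL
    obtain ⟨hi, hkL⟩ := not_or.1 (List.mem_cons.not.1 hnotMem)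
    simp only [List.map_cons, List.prod_cons]
    obtain rfl | hkL' := List.mem_cons.1 hmem
    · have hfix : L.map (Equiv.swap k (k + 1)) = L :=
        (List.map_congr_left fun a ha => Equiv.swap_apply_of_ne_of_ne (hlt a ha).ne'
          (ne_of_mem_of_not_mem ha hkL)).trans (List.map_id L)
      rw [hfix, Equiv.swap_apply_left, rgen_succ hk, mul_assoc]
    · have hik := hlt k hkL'
      rw [Equiv.swap_apply_of_ne_of_ne hik.ne (by lia), ← ih hL' hkL' hkL, ← mul_assoc,
        (commute_sgen_rgen hik).eq, mul_assoc]

theorem tcount_cons (g : P) (l : List P) :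
    tcount (g :: l) = (if g = tgen then 1 else 0) + tcount l := by
  rw [tcount, List.map_cons, List.sum_cons, tcount]

theorem exists_mul_prod_rgen_eq_of_sum_lt (hn : 1 ≤ n) (hL : IsIndexList n L) {g : P}
    (hg : g ∈ Sset n) (hlt : L.sum < ∑ a ∈ negValues n (g * (L.map rgen).prod), a) :
    ∃ L', IsIndexList n L' ∧ g * (L.map rgen).prod = (L'.map rgen).prod ∧
      L'.length = (if g = tgen then 1 else 0) + L.length := by
  have hA := hL.negValues_prod_rgen hn
  obtain rfl | ⟨k, hk, rfl⟩ := hg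
  · have h1 : 1 ∉ L := by
      have := sum_negValues_tgen_mul hn (hL.prod_rgen_mem hn)
      simp only [hA, hL.sum_toFinset, List.mem_toFinset] at this
      split_ifs at this <;> grind
    have hgt : ∀ a ∈ L, 1 < a := fun a ha =>
      lt_of_le_of_ne (hL.2 a ha).1 (ne_of_mem_of_not_mem ha h1).symm
    exact ⟨1 :: L, isIndexList_cons.2 ⟨hgt, ⟨le_rfl, hn⟩, hL⟩, rfl,
      by rw [if_pos rfl, List.length_cons, add_comm]⟩
  · have hkL : k ∈ L ∧ k + 1 ∉ L := by
      have := sum_negValues_sgen_mul (w := (L.map rgen).prod) hk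
      simp only [hA, hL.sum_toFinset, List.mem_toFinset] at this
      split_ifs at this <;> grind
    exact ⟨_, hL.map_swap_succ hk hkL.2, sgen_mul_prod_rgen hL.1 hk.1 hkL.1 hkL.2,
      by rw [if_neg (sgen_ne_tgen hk.1), List.length_map, zero_add]⟩

theorem exists_prod_eq_prod_rgen_of_length_le (hn : 1 ≤ n) {l : List P}
    (hl : ∀ g ∈ l, g ∈ Sset n) (hle : l.length ≤ ∑ a ∈ negValues n l.prod, a) :
    ∃ L, IsIndexList n L ∧ l.prod = (L.map rgen).prod ∧ L.length = tcount l := by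
  induction l with
  | nil => exact ⟨[], isIndexList_nil, rfl, rfl⟩
  | cons g l ih =>
    rw [List.forall_mem_cons] at hl
    rw [List.prod_cons, List.length_cons] at hle
    have hw := signedPerm.prod_mem_of_word hn hl.2
    have hstep := sum_negValues_mul_le hn hl.1 hw
    have hbound := sum_negValues_prod_le_length hn hl.2
    obtain ⟨L, hL, hprod, hcount⟩ := ih hl.2 (by lia)
    rw [hprod, hL.sum_negValues_prod_rgen hn] at hbound
    rw [hprod] at hle
    obtain ⟨L', hL', hprod', hlen⟩ := exists_mul_prod_rgen_eq_of_sum_lt hn hL hl.1 (by lia)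
    exact ⟨L', hL', by rw [List.prod_cons, hprod, hprod'], by rw [hlen, hcount, tcount_cons]⟩

end IndexList

/-! ### Lengths and minimal coset representatives -/

section Length

variable {n : ℕ} {w : P} {L : List ℕ}

theorem exists_word_prod_eq_of_mem_SymN {u : P} (hu : u ∈ SymN n) :
    ∃ l : List P, (∀ g ∈ l, g ∈ Sset n) ∧ l.prod = u := by
  have hinv : (sgen '' Set.Icc 1 (n - 1))⁻¹ ⊆ sgen '' Set.Icc 1 (n - 1) := by
    rintro g ⟨k, hk, hg⟩
    exact ⟨k, hk, by rw [← inv_inv g, ← hg, sgen_inv hk.1]⟩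
  rw [SymN, ← Subgroup.mem_toSubmonoid, Subgroup.closure_toSubmonoid,
    Set.union_eq_self_of_subset_right hinv] at hu
  obtain ⟨l, hl, hprod⟩ := Submonoid.exists_list_of_mem_closure hu
  exact ⟨l, fun g hg => .inr (hl g hg), hprod⟩

theorem exists_mem_SymN_mul_eq_prod_rgen (hn : 1 ≤ n) (hw : w ∈ signedPerm n) :
    ∃ u ∈ SymN n, ∃ L, IsIndexList n L ∧ w * u = (L.map rgen).prod := by
  obtain ⟨L, hL, hA⟩ := exists_isIndexList_toFinset_eq (negValues_subset (n := n) (w := w))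
  refine ⟨w⁻¹ * (L.map rgen).prod, ?_, L, hL, mul_inv_cancel_left _ _⟩
  exact inv_mul_mem_SymN_of_negValues_eq hw (hL.prod_rgen_mem hn)
    (hA.symm.trans (hL.negValues_prod_rgen hn).symm)

theorem exists_word_prod_eq (hn : 1 ≤ n) (hw : w ∈ signedPerm n) :
    ∃ l : List P, (∀ g ∈ l, g ∈ Sset n) ∧ l.prod = w := by
  obtain ⟨u, hu, L, hL, hwu⟩ := exists_mem_SymN_mul_eq_prod_rgen hn hw
  obtain ⟨l₁, hl₁, hprod₁, -⟩ := exists_word_prod_eq_prod_rgen fun i hi => (hL.2 i hi).2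
  obtain ⟨l₂, hl₂, hprod₂⟩ := exists_word_prod_eq_of_mem_SymN (inv_mem hu)
  exact ⟨l₁ ++ l₂, List.forall_mem_append.2 ⟨hl₁, hl₂⟩,
    by rw [List.prod_append, hprod₁, hprod₂, ← hwu, mul_inv_cancel_right]⟩

theorem exists_reduced_word (hn : 1 ≤ n) (hw : w ∈ signedPerm n) :
    ∃ l : List P, (∀ g ∈ l, g ∈ Sset n) ∧ l.prod = w ∧ l.length = len n w ∧
      tcount l = tlen n w := by
  obtain ⟨l, hl, hprod⟩ := exists_word_prod_eq hn hw
  obtain ⟨l', hl', hprod', hlen⟩ : len n w ∈ {k | ∃ l : List P, (∀ g ∈ l, g ∈ Sset n) ∧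
      l.prod = w ∧ l.length = k} := Nat.sInf_mem ⟨l.length, l, hl, hprod, rfl⟩
  have htlen : tlen n w ∈ {k | ∃ l : List P, (∀ g ∈ l, g ∈ Sset n) ∧ l.prod = w ∧
      l.length = len n w ∧ tcount l = k} := Nat.sInf_mem ⟨tcount l', l', hl', hprod', hlen, rfl⟩
  exact htlen

theorem sum_negValues_le_len (hn : 1 ≤ n) (hw : w ∈ signedPerm n) :
    ∑ a ∈ negValues n w, a ≤ len n w := by
  obtain ⟨l, hl, rfl, hlen, -⟩ := exists_reduced_word hn hw
  exact hlen ▸ sum_negValues_prod_le_length hn hl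

theorem IsIndexList.len_prod_rgen (hn : 1 ≤ n) (hL : IsIndexList n L) :
    len n (L.map rgen).prod = L.sum := by
  refine le_antisymm (Nat.sInf_le ?_) ?_
  · exact exists_word_prod_eq_prod_rgen fun i hi => (hL.2 i hi).2
  · exact hL.sum_negValues_prod_rgen hn ▸ sum_negValues_le_len hn (hL.prod_rgen_mem hn)

theorem exists_eq_prod_rgen_of_len_le (hn : 1 ≤ n) (hw : w ∈ signedPerm n)
    (hle : len n w ≤ ∑ a ∈ negValues n w, a) :
    ∃ L, IsIndexList n L ∧ w = (L.map rgen).prod ∧ L.length = tlen n w := by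
  obtain ⟨l, hl, rfl, hlen, hcount⟩ := exists_reduced_word hn hw
  exact hcount ▸ exists_prod_eq_prod_rgen_of_length_le hn hl (hlen ▸ hle)

theorem IsIndexList.tlen_prod_rgen (hn : 1 ≤ n) (hL : IsIndexList n L) :
    tlen n (L.map rgen).prod = L.length := by
  obtain ⟨L', hL', hprod, hlen⟩ := exists_eq_prod_rgen_of_len_le hn (hL.prod_rgen_mem hn)
    (by rw [hL.len_prod_rgen hn, hL.sum_negValues_prod_rgen hn])
  rw [← hlen, ← hL'.card_toFinset, ← hL'.negValues_prod_rgen hn, ← hprod,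
    hL.negValues_prod_rgen hn, hL.card_toFinset]

theorem IsIndexList.prod_rgen_mem_Xset (hn : 1 ≤ n) (hL : IsIndexList n L) :
    (L.map rgen).prod ∈ Xset n := by
  have hw := hL.prod_rgen_mem hn
  refine ⟨hw, fun u hu => ?_⟩
  calc len n (L.map rgen).prod
    _ = ∑ a ∈ negValues n ((L.map rgen).prod * u), a := by
        rw [hL.len_prod_rgen hn, negValues_mul_of_mem_SymN hu, hL.sum_negValues_prod_rgen hn]
    _ ≤ len n ((L.map rgen).prod * u) :=
        sum_negValues_le_len hn (mul_mem hw (SymN_le_signedPerm hu))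

theorem len_le_sum_negValues_of_mem_Xset (hn : 1 ≤ n) (hw : w ∈ Xset n) :
    len n w ≤ ∑ a ∈ negValues n w, a := by
  obtain ⟨u, hu, L, hL, hwu⟩ := exists_mem_SymN_mul_eq_prod_rgen hn hw.1
  calc len n w
    _ ≤ len n (w * u) := hw.2 u hu
    _ = ∑ a ∈ negValues n (w * u), a := by
        rw [hwu, hL.len_prod_rgen hn, hL.sum_negValues_prod_rgen hn]
    _ = ∑ a ∈ negValues n w, a := by rw [negValues_mul_of_mem_SymN hu]

theorem mem_Xl_iff (hn : 1 ≤ n) {l : ℕ} :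
    w ∈ Xl n l ↔ ∃ L, IsIndexList n L ∧ L.length = l ∧ w = (L.map rgen).prod := by
  constructor
  · rintro ⟨hw, rfl⟩
    obtain ⟨L, hL, hprod, hlen⟩ :=
      exists_eq_prod_rgen_of_len_le hn hw.1 (len_le_sum_negValues_of_mem_Xset hn hw)
    exact ⟨L, hL, hlen, hprod⟩
  · rintro ⟨L, hL, rfl, rfl⟩
    exact ⟨hL.prod_rgen_mem_Xset hn, hL.tlen_prod_rgen hn⟩

theorem bijOn_negValues_Xl (hn : 1 ≤ n) (l : ℕ) :
    Set.BijOn (negValues n) (Xl n l) ((Finset.Icc 1 n).powersetCard l : Set (Finset ℕ)) := by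
  refine ⟨fun w hw => ?_, fun w hw v hv h => ?_, fun A hA => ?_⟩
  · obtain ⟨L, hL, rfl, rfl⟩ := (mem_Xl_iff hn).1 hw
    rw [Finset.mem_coe, Finset.mem_powersetCard]
    exact ⟨negValues_subset, by rw [hL.negValues_prod_rgen hn, hL.card_toFinset]⟩
  · obtain ⟨L, hL, -, rfl⟩ := (mem_Xl_iff hn).1 hw
    obtain ⟨L', hL', -, rfl⟩ := (mem_Xl_iff hn).1 hv
    rw [hL.negValues_prod_rgen hn, hL'.negValues_prod_rgen hn, List.toFinset.ext_iff] at h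
    rw [hL.1.eq_of_mem_iff hL'.1 h]
  · obtain ⟨hsub, hcard⟩ := Finset.mem_powersetCard.1 (Finset.mem_coe.1 hA)
    obtain ⟨L, hL, rfl⟩ := exists_isIndexList_toFinset_eq hsub
    exact ⟨_, (mem_Xl_iff hn).2 ⟨L, hL, hL.card_toFinset ▸ hcard, rfl⟩, hL.negValues_prod_rgen hn⟩

theorem ncard_Xl (hn : 1 ≤ n) (l : ℕ) : (Xl n l).ncard = n.choose l := by
  rw [(bijOn_negValues_Xl hn l).ncard_eq, Set.ncard_coe_finset, Finset.card_powersetCard,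
    Nat.card_Icc, Nat.add_sub_cancel]

end Length

/-- `X_n^{(l)}` consists exactly of the products
`r_{i_1} ⋯ r_{i_l}` with `1 ≤ i_1 < ⋯ < i_l ≤ n`; such a product has length
`i_1 + ⋯ + i_l`; and `|X_n^{(l)}| = C(n, l)`. -/
theorem Xl_description (n : ℕ) (hn : 1 ≤ n) (l : ℕ) (hl : l ≤ n) :
    (Xl n l = {w : P | ∃ L : List ℕ, List.Chain' (· < ·) L ∧
        (∀ i ∈ L, 1 ≤ i ∧ i ≤ n) ∧ L.length = l ∧ w = (L.map rgen).prod}) ∧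
    (∀ L : List ℕ, List.Chain' (· < ·) L → (∀ i ∈ L, 1 ≤ i ∧ i ≤ n) →
        L.length = l → len n (L.map rgen).prod = L.sum) ∧
    (Xl n l).ncard = n.choose l := by
  refine ⟨Set.ext fun w => ?_, fun L hc hb _ => ?_, ncard_Xl hn l⟩
  · rw [mem_Xl_iff hn]
    simp only [IsIndexList, ← List.isChain_iff_pairwise, and_assoc]
    rfl
  · exact IsIndexList.len_prod_rgen hn ⟨List.isChain_iff_pairwise.1 hc, hb⟩
end

section
/- Let 0 ≤ l ≤ n. The map Y_{l,n−l} → X_n^{(l)}, w ↦ w a_l, is a bijection. -/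
open scoped Classical

/-!
Twice the length of `w ∈ W_n` is the number of its inversions on `I_n` plus the number of
`j ∈ {1, …, n}` with `w(j) < 0`, and the latter number is `ℓ_t(w)`. Both counts are additive on a
product `w u` as soon as every inversion of `u` is one of `w u`: this holds for `u` a simple
generator that is not a descent of `w`, which yields the length formulas, and for `u ∈ 𝔖_{l,n-l}`
when `w` increases on `{1, …, l}` and on `{l + 1, …, n}`, which yields the minimal coset
representatives.

Hence `Y_{l,n-l}` consists of the `w` that are increasing on both blocks and positive on
`{1, …, n}`, and `X_n^{(l)}` of those that are increasing on both blocks, negative on `{1, …, l}`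
and positive on `{l + 1, …, n}`. Since `a_l` sends `j ≤ l` to `-(l + 1 - j)` and fixes `j > l`,
right multiplication by `a_l` exchanges the two descriptions.
-/

namespace Hyperoctahedral

open scoped Finset Pointwise

/-! ### Signed permutations and the generators -/

/-- The hyperoctahedral group `W_n` as a subgroup of the permutations of `ℤ`. -/
def signedPerm (n : ℕ) : Subgroup P where
  carrier := Wset n
  one_mem' := ⟨fun _ => rfl, fun _ _ => rfl⟩
  mul_mem' := fun {u v} hu hv =>
    ⟨fun x => by simp [hv.1, hu.1], fun x hx => by simp [hv.2 x hx, hu.2 x hx]⟩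
  inv_mem' := fun {u} hu =>
    ⟨fun x => by rw [Equiv.Perm.inv_eq_iff_eq, hu.1]; simp,
      fun x hx => by rw [Equiv.Perm.inv_eq_iff_eq, hu.2 x hx]⟩

/-- The set `I_n = {±1, …, ±n}` permuted by `W_n`. -/
noncomputable def indices (n : ℕ) : Finset ℤ := (Finset.Icc (-n : ℤ) n).erase 0

variable {n l i : ℕ} {u w g : P} {x y : ℤ}

theorem mem_indices : x ∈ indices n ↔ x ≠ 0 ∧ -n ≤ x ∧ x ≤ n := by
  simp [indices]

theorem apply_neg (hw : w ∈ signedPerm n) (x : ℤ) : w (-x) = -w x := hw.1 x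

theorem apply_zero (hw : w ∈ signedPerm n) : w 0 = 0 := by
  have := apply_neg hw 0
  rw [neg_zero] at this
  omega

theorem apply_of_lt (hw : w ∈ signedPerm n) (hx : n < x) : w x = x :=
  hw.2 x (lt_abs.2 (Or.inl hx))

theorem apply_mem_indices (hw : w ∈ signedPerm n) (hx : x ∈ indices n) : w x ∈ indices n := by
  rw [mem_indices] at hx ⊢
  refine ⟨fun h => hx.1 (w.injective (h.trans (apply_zero hw).symm)), ?_⟩
  by_contra h
  have hfix : w x = x := w.injective (hw.2 (w x) (by rw [lt_abs]; omega))
  omega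

theorem apply_mem_indices_iff (hw : w ∈ signedPerm n) : w x ∈ indices n ↔ x ∈ indices n :=
  ⟨fun h => by simpa using apply_mem_indices (inv_mem hw) h, apply_mem_indices hw⟩

theorem sgen_apply (hi : 1 ≤ i) (x : ℤ) : sgen i x =
    if x = i then (i : ℤ) + 1 else if x = i + 1 then (i : ℤ)
    else if x = -i then -(i + 1 : ℤ) else if x = -(i + 1) then -(i : ℤ) else x := by
  simp only [sgen, Equiv.Perm.mul_apply, Equiv.swap_apply_def]
  split_ifs <;> omega

theorem tgen_apply (x : ℤ) : tgen x = if x = 1 then -1 else if x = -1 then 1 else x := by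
  simp only [tgen, Equiv.swap_apply_def]

theorem sgen_ne_tgen (hi : 1 ≤ i) : sgen i ≠ tgen := fun h => by
  have := sgen_apply hi 1
  rw [h, tgen_apply] at this
  split_ifs at this <;> omega

theorem mem_Sset_iff : g ∈ Sset n ↔ g = tgen ∨ ∃ i, 1 ≤ i ∧ i < n ∧ g = sgen i := by
  simp only [Sset, Set.mem_insert_iff, Set.mem_image, Set.mem_Icc]
  refine or_congr_right (exists_congr fun i => ?_)
  rw [eq_comm (a := g), ← and_assoc]
  exact and_congr_left fun _ => by omega

theorem tgen_mem_Sset : tgen ∈ Sset n := mem_Sset_iff.2 (Or.inl rfl)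

theorem sgen_mem_Sset (hi : 1 ≤ i) (hin : i < n) : sgen i ∈ Sset n :=
  mem_Sset_iff.2 (Or.inr ⟨i, hi, hin, rfl⟩)

theorem gen_mul_self (hg : g ∈ Sset n) : g * g = 1 := by
  rcases mem_Sset_iff.1 hg with rfl | ⟨i, hi, -, rfl⟩
  · exact Equiv.swap_mul_self _ _
  · ext x
    simp only [Equiv.Perm.mul_apply, sgen_apply hi, Equiv.Perm.one_apply]
    split_ifs <;> omega

theorem sgen_mem_signedPerm (hi : 1 ≤ i) (hin : i < n) : sgen i ∈ signedPerm n := by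
  refine ⟨fun x => ?_, fun x hx => ?_⟩
  · simp only [sgen_apply hi]
    split_ifs <;> omega
  · rw [lt_abs] at hx
    simp only [sgen_apply hi]
    split_ifs <;> omega

theorem tgen_mem_signedPerm (hn : 1 ≤ n) : tgen ∈ signedPerm n := by
  refine ⟨fun x => ?_, fun x hx => ?_⟩
  · simp only [tgen_apply]
    split_ifs <;> omega
  · rw [lt_abs] at hx
    simp only [tgen_apply]
    split_ifs <;> omega

theorem gen_mem_signedPerm (hn : 1 ≤ n) (hg : g ∈ Sset n) : g ∈ signedPerm n := by
  rcases mem_Sset_iff.1 hg with rfl | ⟨i, hi, hin, rfl⟩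
  exacts [tgen_mem_signedPerm hn, sgen_mem_signedPerm hi hin]

/-! ### Inversions and additivity -/

/-- The inversions of `w` on `I_n`, both `(a, b)` and its mirror image `(-b, -a)` being counted;
they determine lengths and descents. -/
noncomputable def inversions (n : ℕ) (w : P) : Finset (ℤ × ℤ) :=
  (indices n ×ˢ indices n).filter fun p => p.1 < p.2 ∧ w p.2 < w p.1

/-- The positions `1 ≤ j ≤ n` at which `w` takes a negative value; `ℓ_t(w)` counts them. -/
noncomputable def negatives (n : ℕ) (w : P) : Finset ℤ :=
  (Finset.Icc (1 : ℤ) n).filter fun j => w j < 0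

/-- Twice the length of `w`: the length is the number of orbits of `(a, b) ↦ (-b, -a)` on the
inversions, and the orbits `{(-j, j)}` with one element correspond to `negatives n w`. -/
noncomputable def twiceLength (n : ℕ) (w : P) : ℕ := #(inversions n w) + #(negatives n w)

theorem mem_inversions :
    (x, y) ∈ inversions n w ↔ x ∈ indices n ∧ y ∈ indices n ∧ x < y ∧ w y < w x := by
  simp [inversions, and_assoc]

theorem mem_negatives : x ∈ negatives n w ↔ 1 ≤ x ∧ x ≤ n ∧ w x < 0 := by
  simp [negatives, and_assoc]

theorem neg_neg_mem_inversions_iff (hw : w ∈ signedPerm n) :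
    (-y, -x) ∈ inversions n w ↔ (x, y) ∈ inversions n w := by
  simp only [mem_inversions, mem_indices, apply_neg hw]
  omega

theorem mem_negatives_iff_mem_inversions (hw : w ∈ signedPerm n) :
    x ∈ negatives n w ↔ 0 < x ∧ (-x, x) ∈ inversions n w := by
  simp only [mem_negatives, mem_inversions, mem_indices, apply_neg hw]
  omega

theorem map_inversions_mul_sdiff (hu : u ∈ signedPerm n)
    (h : inversions n u ⊆ inversions n (w * u)) :
    (inversions n (w * u) \ inversions n u).map (u.prodCongr u).toEmbedding = inversions n w := by
  ext ⟨a, b⟩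
  obtain ⟨x, rfl⟩ := u.surjective a
  obtain ⟨y, rfl⟩ := u.surjective b
  have hyx : (y, x) ∈ inversions n u → (y, x) ∈ inversions n (w * u) := @h _
  have hne : u x = u y ↔ x = y := u.injective.eq_iff
  simp only [Finset.mem_map_equiv, Equiv.prodCongr_symm, Equiv.prodCongr_apply, Prod.map_apply,
    Equiv.symm_apply_apply, Finset.mem_sdiff, mem_inversions, apply_mem_indices_iff hu,
    Equiv.Perm.mul_apply] at hyx ⊢
  by_cases hx : x ∈ indices n <;> by_cases hy : y ∈ indices n <;>
    simp only [hx, hy, true_and, false_and, and_false] at hyx ⊢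
  omega

theorem card_inversions_mul (hu : u ∈ signedPerm n) (h : inversions n u ⊆ inversions n (w * u)) :
    #(inversions n (w * u)) = #(inversions n w) + #(inversions n u) := by
  rw [← map_inversions_mul_sdiff hu h, Finset.card_map, Finset.card_sdiff_add_card_eq_card h]

theorem negatives_subset_mul (hw : w ∈ signedPerm n) (hu : u ∈ signedPerm n)
    (h : inversions n u ⊆ inversions n (w * u)) : negatives n u ⊆ negatives n (w * u) := by
  intro x hx
  rw [mem_negatives_iff_mem_inversions hu] at hx
  exact (mem_negatives_iff_mem_inversions (mul_mem hw hu)).2 ⟨hx.1, h hx.2⟩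

theorem map_negatives_mul_sdiff (hw : w ∈ signedPerm n) (hu : u ∈ signedPerm n)
    (h : inversions n u ⊆ inversions n (w * u)) :
    (negatives n (w * u) \ negatives n u).map u.toEmbedding = negatives n w := by
  ext a
  obtain ⟨x, rfl⟩ := u.surjective a
  have hpos := @negatives_subset_mul _ _ _ hw hu h (-x)
  have hmem := apply_mem_indices_iff hu (x := x)
  simp only [Finset.mem_map_equiv, Equiv.symm_apply_apply, Finset.mem_sdiff, mem_negatives,
    mem_indices, Equiv.Perm.mul_apply, apply_neg hu, apply_neg hw] at hpos hmem ⊢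
  omega

theorem card_negatives_mul (hw : w ∈ signedPerm n) (hu : u ∈ signedPerm n)
    (h : inversions n u ⊆ inversions n (w * u)) :
    #(negatives n (w * u)) = #(negatives n w) + #(negatives n u) := by
  rw [← map_negatives_mul_sdiff hw hu h, Finset.card_map,
    Finset.card_sdiff_add_card_eq_card (negatives_subset_mul hw hu h)]

theorem twiceLength_mul (hw : w ∈ signedPerm n) (hu : u ∈ signedPerm n)
    (h : inversions n u ⊆ inversions n (w * u)) :
    twiceLength n (w * u) = twiceLength n w + twiceLength n u := by
  rw [twiceLength, card_inversions_mul hu h, card_negatives_mul hw hu h, twiceLength, twiceLength]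
  omega

theorem inversions_one : inversions n 1 = ∅ := by
  ext ⟨x, y⟩
  simp only [mem_inversions, Equiv.Perm.one_apply, Finset.notMem_empty, iff_false]
  omega

theorem negatives_one : negatives n 1 = ∅ := by
  ext x
  simp only [mem_negatives, Equiv.Perm.one_apply, Finset.notMem_empty, iff_false]
  omega

theorem twiceLength_one : twiceLength n 1 = 0 := by
  simp [twiceLength, inversions_one, negatives_one]

/-! ### Descents -/

theorem inversions_sgen (hi : 1 ≤ i) (hin : i < n) :
    inversions n (sgen i) = {((i : ℤ), (i + 1 : ℤ)), (-(i + 1 : ℤ), -(i : ℤ))} := by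
  ext ⟨x, y⟩
  simp only [mem_inversions, mem_indices, sgen_apply hi, Finset.mem_insert, Finset.mem_singleton,
    Prod.mk.injEq]
  split_ifs <;> omega

theorem negatives_sgen (hi : 1 ≤ i) : negatives n (sgen i) = ∅ := by
  ext x
  simp only [mem_negatives, sgen_apply hi, Finset.notMem_empty, iff_false]
  split_ifs <;> omega

theorem inversions_tgen (hn : 1 ≤ n) : inversions n tgen = {(-1, 1)} := by
  ext ⟨x, y⟩
  simp only [mem_inversions, mem_indices, tgen_apply, Finset.mem_singleton, Prod.mk.injEq]
  split_ifs <;> omega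

theorem negatives_tgen (hn : 1 ≤ n) : negatives n tgen = {1} := by
  ext x
  simp only [mem_negatives, tgen_apply, Finset.mem_singleton]
  split_ifs <;> omega

theorem card_negatives_gen (hn : 1 ≤ n) (hg : g ∈ Sset n) :
    #(negatives n g) = if g = tgen then 1 else 0 := by
  rcases mem_Sset_iff.1 hg with rfl | ⟨i, hi, -, rfl⟩
  · simp [negatives_tgen hn]
  · simp [negatives_sgen hi, sgen_ne_tgen hi]

theorem twiceLength_gen (hn : 1 ≤ n) (hg : g ∈ Sset n) : twiceLength n g = 2 := by
  rcases mem_Sset_iff.1 hg with rfl | ⟨i, hi, hin, rfl⟩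
  · simp [twiceLength, inversions_tgen hn, negatives_tgen hn]
  · rw [twiceLength, inversions_sgen hi hin, negatives_sgen hi, Finset.card_pair, Finset.card_empty]
    rw [Ne, Prod.mk.injEq]
    omega

theorem inversions_sgen_subset_iff (hw : w ∈ signedPerm n) (hi : 1 ≤ i) (hin : i < n) :
    inversions n (sgen i) ⊆ inversions n w ↔ w (i + 1) < w i := by
  rw [inversions_sgen hi hin, Finset.insert_subset_iff, Finset.singleton_subset_iff,
    neg_neg_mem_inversions_iff hw, and_self, mem_inversions, mem_indices, mem_indices]
  omega

theorem inversions_tgen_subset_iff (hn : 1 ≤ n) (hw : w ∈ signedPerm n) :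
    inversions n tgen ⊆ inversions n w ↔ w 1 < 0 := by
  rw [inversions_tgen hn, Finset.singleton_subset_iff, mem_inversions, mem_indices, mem_indices,
    apply_neg hw]
  omega

theorem inversions_gen_subset_or_subset_mul (hn : 1 ≤ n) (hw : w ∈ signedPerm n)
    (hg : g ∈ Sset n) :
    inversions n g ⊆ inversions n w ∨ inversions n g ⊆ inversions n (w * g) := by
  have hwg := mul_mem hw (gen_mem_signedPerm hn hg)
  rcases mem_Sset_iff.1 hg with rfl | ⟨i, hi, hin, rfl⟩
  · rw [inversions_tgen_subset_iff hn hw, inversions_tgen_subset_iff hn hwg]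
    have hne : w 1 ≠ w 0 := w.injective.ne one_ne_zero
    rw [apply_zero hw] at hne
    simp only [Equiv.Perm.mul_apply, tgen_apply, if_true, apply_neg hw]
    omega
  · rw [inversions_sgen_subset_iff hw hi hin, inversions_sgen_subset_iff hwg hi hin]
    have hne : w (i + 1) ≠ w i := w.injective.ne (by omega)
    simp only [Equiv.Perm.mul_apply, sgen_apply hi, if_true, left_eq_add, one_ne_zero, if_false,
      add_eq_left]
    omega

theorem twiceLength_mul_gen_of_subset (hn : 1 ≤ n) (hw : w ∈ signedPerm n) (hg : g ∈ Sset n)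
    (h : inversions n g ⊆ inversions n w) : twiceLength n (w * g) + 2 = twiceLength n w := by
  have hgn := gen_mem_signedPerm hn hg
  have hcancel : w * g * g = w := by rw [mul_assoc, gen_mul_self hg, mul_one]
  have := twiceLength_mul (mul_mem hw hgn) hgn (by rwa [hcancel])
  rw [hcancel, twiceLength_gen hn hg] at this
  exact this.symm

theorem twiceLength_mul_gen_le (hn : 1 ≤ n) (hw : w ∈ signedPerm n) (hg : g ∈ Sset n) :
    twiceLength n (w * g) ≤ twiceLength n w + 2 := by
  rcases inversions_gen_subset_or_subset_mul hn hw hg with h | h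
  · have := twiceLength_mul_gen_of_subset hn hw hg h
    omega
  · rw [twiceLength_mul hw (gen_mem_signedPerm hn hg) h, twiceLength_gen hn hg]

theorem eq_one_of_strictMono (h : StrictMono w) (h0 : w 0 = 0) : w = 1 := by
  have hsucc (x : ℤ) : w (x + 1) = w x + 1 :=
    OrderIso.map_succ (h.orderIsoOfSurjective w w.surjective) x
  ext x
  induction x using Int.induction_on with
  | zero => exact h0
  | succ k ih => rw [hsucc, ih]; rfl
  | pred k ih =>
    have := hsucc (-k - 1)
    rw [sub_add_cancel, ih] at this
    simp only [Equiv.Perm.one_apply] at this ⊢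
    omega

theorem exists_gen_inversions_subset (hn : 1 ≤ n) (hw : w ∈ signedPerm n) (hne : w ≠ 1) :
    ∃ g ∈ Sset n, inversions n g ⊆ inversions n w := by
  by_contra! h
  have ht := h tgen tgen_mem_Sset
  rw [inversions_tgen_subset_iff hn hw] at ht
  have hs (i : ℕ) (hi : 1 ≤ i) (hin : i < n) : ¬ w (i + 1) < w i := fun hlt =>
    h _ (sgen_mem_Sset hi hin) ((inversions_sgen_subset_iff hw hi hin).2 hlt)
  have hstep (x : ℕ) : w x < w (x + 1) := by
    have hinj : w x ≠ w (x + 1) := w.injective.ne (by omega)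
    rcases Nat.eq_zero_or_pos x with rfl | hpos
    · simp only [Nat.cast_zero, zero_add, apply_zero hw] at hinj ⊢
      omega
    rcases lt_or_ge x n with hlt | hge
    · have := hs x hpos hlt
      omega
    · rw [apply_of_lt hw (x := x + 1) (by omega)] at hinj ⊢
      rcases hge.eq_or_lt with rfl | hlt
      · have := mem_indices.1 (apply_mem_indices hw (x := n) (mem_indices.2 (by omega)))
        omega
      · rw [apply_of_lt hw (by omega)]
        omega
  refine hne (eq_one_of_strictMono (strictMono_of_odd_strictMonoOn_nonneg hw.1 ?_) (apply_zero hw))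
  refine strictMonoOn_of_lt_add_one Set.ordConnected_Ici fun x _ hx _ => ?_
  lift x to ℕ using hx
  exact hstep x

/-! ### Reduced words -/

theorem prod_mem_signedPerm (hn : 1 ≤ n) {L : List P} (hL : ∀ g ∈ L, g ∈ Sset n) :
    L.prod ∈ signedPerm n :=
  list_prod_mem fun g hg => gen_mem_signedPerm hn (hL g hg)

theorem twiceLength_prod_le (hn : 1 ≤ n) {L : List P} (hL : ∀ g ∈ L, g ∈ Sset n) :
    twiceLength n L.prod ≤ 2 * L.length := by
  induction L using List.reverseRecOn with
  | nil => simp [twiceLength_one]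
  | append_singleton L g ih =>
    simp only [List.forall_mem_append, List.forall_mem_singleton] at hL
    have hstep := twiceLength_mul_gen_le hn (prod_mem_signedPerm hn hL.1) hL.2
    have hprev := ih hL.1
    simp only [List.prod_append, List.prod_singleton, List.length_append, List.length_singleton]
    omega

theorem tcount_eq_card_negatives_of_twiceLength (hn : 1 ≤ n) {L : List P} (hL : ∀ g ∈ L, g ∈ Sset n)
    (h : twiceLength n L.prod = 2 * L.length) : tcount L = #(negatives n L.prod) := by
  induction L using List.reverseRecOn with
  | nil => simp [tcount, negatives_one]
  | append_singleton L g ih =>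
    simp only [List.forall_mem_append, List.forall_mem_singleton] at hL
    simp only [List.prod_append, List.prod_singleton, List.length_append,
      List.length_singleton] at h ⊢
    have hLn := prod_mem_signedPerm hn hL.1
    have hprev := twiceLength_prod_le hn hL.1
    have hstep := twiceLength_mul_gen_le hn hLn hL.2
    have hascent : inversions n g ⊆ inversions n (L.prod * g) := by
      refine (inversions_gen_subset_or_subset_mul hn hLn hL.2).resolve_left fun hdesc => ?_
      have := twiceLength_mul_gen_of_subset hn hLn hL.2 hdesc
      omega
    rw [card_negatives_mul hLn (gen_mem_signedPerm hn hL.2) hascent,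
      card_negatives_gen hn hL.2, ← ih hL.1 (by omega)]
    simp [tcount]

theorem exists_word_two_mul_length_eq (hn : 1 ≤ n) (hw : w ∈ signedPerm n) :
    ∃ L : List P, (∀ g ∈ L, g ∈ Sset n) ∧ L.prod = w ∧ 2 * L.length = twiceLength n w := by
  induction hk : twiceLength n w using Nat.strong_induction_on generalizing w with
  | _ k ih =>
    by_cases h1 : w = 1
    · exact ⟨[], by simp, by simp [h1], by simp [← hk, h1, twiceLength_one]⟩
    obtain ⟨g, hg, hdesc⟩ := exists_gen_inversions_subset hn hw h1
    have hlen := twiceLength_mul_gen_of_subset hn hw hg hdesc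
    obtain ⟨L, hL, hprod, hlength⟩ :=
      ih _ (by omega) (mul_mem hw (gen_mem_signedPerm hn hg)) rfl
    refine ⟨L ++ [g], ?_, ?_, ?_⟩
    · simpa only [List.forall_mem_append, List.forall_mem_singleton] using ⟨hL, hg⟩
    · rw [List.prod_append, List.prod_singleton, hprod, mul_assoc, gen_mul_self hg, mul_one]
    · rw [List.length_append, List.length_singleton]
      omega

theorem two_mul_len (hn : 1 ≤ n) (hw : w ∈ signedPerm n) : 2 * len n w = twiceLength n w := by
  obtain ⟨L, hL, hprod, hlength⟩ := exists_word_two_mul_length_eq hn hw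
  have hle : len n w ≤ L.length := Nat.sInf_le ⟨L, hL, hprod, rfl⟩
  obtain ⟨L', hL', hprod', hlength' : L'.length = len n w⟩ :=
    Nat.sInf_mem (s := {k | ∃ l : List P, (∀ g ∈ l, g ∈ Sset n) ∧ l.prod = w ∧ l.length = k})
      ⟨_, L, hL, hprod, rfl⟩
  have hge := twiceLength_prod_le hn hL'
  rw [hprod'] at hge
  omega

theorem exists_reduced_word (hn : 1 ≤ n) (hw : w ∈ signedPerm n) :
    ∃ L : List P, (∀ g ∈ L, g ∈ Sset n) ∧ L.prod = w ∧ L.length = len n w := by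
  obtain ⟨L, hL, hprod, hlength⟩ := exists_word_two_mul_length_eq hn hw
  exact ⟨L, hL, hprod, by have := two_mul_len hn hw; omega⟩

theorem tcount_eq_card_negatives (hn : 1 ≤ n) {L : List P} (hL : ∀ g ∈ L, g ∈ Sset n)
    (hlength : L.length = len n L.prod) : tcount L = #(negatives n L.prod) :=
  tcount_eq_card_negatives_of_twiceLength hn hL <| by
    rw [← two_mul_len hn (prod_mem_signedPerm hn hL), hlength]

theorem tlen_eq_card_negatives (hn : 1 ≤ n) (hw : w ∈ signedPerm n) :
    tlen n w = #(negatives n w) := by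
  obtain ⟨L, hL, hprod, hlength⟩ := exists_reduced_word hn hw
  obtain ⟨L', hL', rfl, hlength', htcount⟩ :=
    Nat.sInf_mem (s := {k | ∃ l : List P, (∀ g ∈ l, g ∈ Sset n) ∧ l.prod = w ∧
      l.length = len n w ∧ tcount l = k}) ⟨_, L, hL, hprod, hlength, rfl⟩
  exact htcount.symm.trans (tcount_eq_card_negatives hn hL' hlength')

/-! ### Parabolic subgroups and minimal coset representatives -/

theorem SymLR_zero (n : ℕ) : SymLR n 0 = SymN n := by
  rw [SymLR, SymN]
  congr 2
  ext i
  simp only [Set.mem_Icc, Set.mem_ofPred_eq]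
  omega

theorem sgen_mem_SymLR (hi : 1 ≤ i) (hin : i < n) (hil : i ≠ l) : sgen i ∈ SymLR n l :=
  Subgroup.subset_closure ⟨i, ⟨hi, by omega, hil⟩, rfl⟩

theorem SymLR_le_SymN : SymLR n l ≤ SymN n :=
  Subgroup.closure_mono (Set.image_mono fun _ hi => ⟨hi.1, hi.2.1⟩)

theorem SymLR_le_signedPerm : SymLR n l ≤ signedPerm n := by
  rw [SymLR, Subgroup.closure_le]
  rintro _ ⟨i, ⟨hi, hin, -⟩, rfl⟩
  exact sgen_mem_signedPerm hi (by omega)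

theorem lt_apply_iff_of_mem_SymLR (hu : u ∈ SymLR n l) : (l : ℤ) < u x ↔ (l : ℤ) < x := by
  have hle : SymLR n l ≤ MulAction.stabilizer P (Set.Ioi (l : ℤ)) := by
    rw [SymLR, Subgroup.closure_le]
    rintro _ ⟨i, ⟨hi, -, hil⟩, rfl⟩
    refine MulAction.mem_stabilizer_set.2 fun x => ?_
    rw [Equiv.Perm.smul_def, Set.mem_Ioi, Set.mem_Ioi, sgen_apply hi]
    split_ifs <;> omega
  exact MulAction.mem_stabilizer_set.1 (hle hu) x

theorem apply_pos_iff_of_mem_SymN (hu : u ∈ SymN n) : 0 < u x ↔ 0 < x :=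
  lt_apply_iff_of_mem_SymLR (l := 0) (by rwa [SymLR_zero])

/-- `w` is increasing on the blocks `{1, …, l}` and `{l + 1, …, n}` stabilized by `𝔖_{l,n-l}`; this
describes the minimal-length representatives of the left cosets of `𝔖_{l,n-l}`. -/
def IncreasingOnBlocks (n l : ℕ) (w : P) : Prop :=
  StrictMonoOn w (Set.Icc 1 l) ∧ StrictMonoOn w (Set.Icc (l + 1) n)

theorem increasingOnBlocks_of_apply_lt (hl : l ≤ n)
    (h : ∀ i : ℕ, 1 ≤ i → i < n → i ≠ l → w i < w (i + 1)) : IncreasingOnBlocks n l w := by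
  constructor <;> refine strictMonoOn_of_lt_add_one Set.ordConnected_Icc fun x _ hx hx' => ?_ <;>
    rw [Set.mem_Icc] at hx hx' <;> lift x to ℕ using (by omega) <;>
    exact h x (by omega) (by omega) (by omega)

theorem IncreasingOnBlocks.apply_lt (h : IncreasingOnBlocks n l w) (hx : 0 < x) (hxy : x < y)
    (hy : y ≤ n) (hl : (l : ℤ) < x ↔ (l : ℤ) < y) : w x < w y := by
  rcases le_or_gt x l with hxl | hxl
  · exact h.1 (Set.mem_Icc.2 (by omega)) (Set.mem_Icc.2 (by omega)) hxy
  · exact h.2 (Set.mem_Icc.2 (by omega)) (Set.mem_Icc.2 (by omega)) hxy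

theorem IncreasingOnBlocks.inversions_subset_mul (hw : w ∈ signedPerm n)
    (h : IncreasingOnBlocks n l w) (hu : u ∈ SymLR n l) :
    inversions n u ⊆ inversions n (w * u) := by
  have hun := SymLR_le_signedPerm hu
  have hpos (x : ℤ) : 0 < u x ↔ 0 < x := apply_pos_iff_of_mem_SymN (SymLR_le_SymN hu)
  have hblock (x : ℤ) : (l : ℤ) < u x ↔ (l : ℤ) < x := lt_apply_iff_of_mem_SymLR hu
  have of_pos {x y : ℤ} (hx : 0 < x) (hxy : (x, y) ∈ inversions n u) :
      (x, y) ∈ inversions n (w * u) := by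
    obtain ⟨hxn, hyn, hlt, hult⟩ := mem_inversions.1 hxy
    have huxn := mem_indices.1 (apply_mem_indices hun hxn)
    have := hpos y
    have := hblock x
    have := hblock y
    exact mem_inversions.2
      ⟨hxn, hyn, hlt, h.apply_lt (by omega) hult huxn.2.2 (by omega)⟩
  rintro ⟨x, y⟩ hxy
  obtain ⟨hxn, hyn, hlt, hult⟩ := mem_inversions.1 hxy
  rw [mem_indices] at hxn hyn
  rcases lt_or_ge 0 x with hx | hx
  · exact of_pos hx hxy
  · have := hpos x
    have := hpos y
    have := apply_mem_indices hun (mem_indices.2 hxn)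
    rw [mem_indices] at this
    rw [← neg_neg_mem_inversions_iff (mul_mem hw hun)]
    exact of_pos (by omega) ((neg_neg_mem_inversions_iff hun).2 hxy)

theorem len_le_len_mul_iff_increasingOnBlocks (hn : 1 ≤ n) (hl : l ≤ n) (hw : w ∈ signedPerm n) :
    (∀ u ∈ SymLR n l, len n w ≤ len n (w * u)) ↔ IncreasingOnBlocks n l w := by
  constructor
  · intro hmin
    refine increasingOnBlocks_of_apply_lt hl fun i hi hin hil => ?_
    have hs := sgen_mem_signedPerm hi hin
    have hlen := two_mul_len hn hw
    have hlen' := two_mul_len hn (mul_mem hw hs)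
    have hle := hmin _ (sgen_mem_SymLR hi hin hil)
    have hinj : w i ≠ w (i + 1) := w.injective.ne (by omega)
    by_contra hdesc
    have := twiceLength_mul_gen_of_subset hn hw (sgen_mem_Sset hi hin)
      ((inversions_sgen_subset_iff hw hi hin).2 (by omega))
    omega
  · intro h u hu
    have hun := SymLR_le_signedPerm hu
    have hadd := twiceLength_mul hw hun (h.inversions_subset_mul hw hu)
    rw [← two_mul_len hn hw, ← two_mul_len hn (mul_mem hw hun)] at hadd
    omega

theorem mem_SymN_iff (hn : 1 ≤ n) :
    w ∈ SymN n ↔ w ∈ signedPerm n ∧ ∀ x, 0 < x → 0 < w x := by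
  refine ⟨fun hw => ⟨SymLR_le_signedPerm (l := 0) (by rwa [SymLR_zero]), fun x =>
    (apply_pos_iff_of_mem_SymN hw).2⟩, fun ⟨hw, hpos⟩ => ?_⟩
  -- A reduced word of `w` contains no `t`, since `w` has no negative values.
  obtain ⟨L, hL, rfl, hlength⟩ := exists_reduced_word hn hw
  have hneg : negatives n L.prod = ∅ := by
    ext x
    have := hpos x
    simp only [mem_negatives, Finset.notMem_empty, iff_false]
    omega
  have htcount := tcount_eq_card_negatives hn hL hlength
  rw [hneg, Finset.card_empty, tcount, List.sum_eq_zero_iff] at htcount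
  refine list_prod_mem fun g hg => ?_
  rcases mem_Sset_iff.1 (hL g hg) with rfl | ⟨i, hi, hin, rfl⟩
  · simpa using htcount 1 (List.mem_map.2 ⟨tgen, hg, if_pos rfl⟩)
  · exact Subgroup.subset_closure ⟨i, ⟨hi, by omega⟩, rfl⟩

theorem mem_Yset_iff (hn : 1 ≤ n) (hl : l ≤ n) : w ∈ Yset n l ↔
    w ∈ signedPerm n ∧ (∀ x, 0 < x → 0 < w x) ∧ IncreasingOnBlocks n l w := by
  rw [← and_assoc, ← mem_SymN_iff hn]
  refine and_congr_right fun hw => len_le_len_mul_iff_increasingOnBlocks hn hl ?_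
  exact ((mem_SymN_iff hn).1 hw).1

theorem mem_Xset_iff (hn : 1 ≤ n) :
    w ∈ Xset n ↔ w ∈ signedPerm n ∧ StrictMonoOn w (Set.Icc 1 n) := by
  refine and_congr_right fun hw => ?_
  rw [← SymLR_zero, len_le_len_mul_iff_increasingOnBlocks hn n.zero_le hw]
  simp only [IncreasingOnBlocks, Nat.cast_zero, zero_add]
  exact and_iff_right ((Set.subsingleton_Icc_of_ge zero_le_one).strictMonoOn w)

theorem eq_Icc_one_card_of_lower {s : Finset ℤ} (hpos : ∀ x ∈ s, 1 ≤ x)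
    (hlower : ∀ x ∈ s, ∀ y, 1 ≤ y → y ≤ x → y ∈ s) : s = Finset.Icc 1 (#s : ℤ) := by
  refine Finset.eq_of_subset_of_card_le (fun x hx => ?_) (by simp)
  have hsub : Finset.Icc 1 x ⊆ s := fun y hy =>
    hlower x hx y (Finset.mem_Icc.1 hy).1 (Finset.mem_Icc.1 hy).2
  have hcard := Finset.card_le_card hsub
  have := hpos x hx
  rw [Int.card_Icc] at hcard
  rw [Finset.mem_Icc]
  omega

theorem negatives_eq_Icc (h : StrictMonoOn w (Set.Icc 1 n)) :
    negatives n w = Finset.Icc 1 (#(negatives n w) : ℤ) := by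
  refine eq_Icc_one_card_of_lower (fun x hx => (mem_negatives.1 hx).1) fun x hx y hy hyx => ?_
  rw [mem_negatives] at hx ⊢
  have := h.monotoneOn (Set.mem_Icc.2 (by omega)) (Set.mem_Icc.2 (by omega)) hyx
  omega

theorem mem_Xl_iff (hn : 1 ≤ n) (hl : l ≤ n) : w ∈ Xl n l ↔
    w ∈ signedPerm n ∧ (∀ x, 0 < x → (w x < 0 ↔ x ≤ l)) ∧ IncreasingOnBlocks n l w := by
  have hXl : w ∈ Xl n l ↔ w ∈ Xset n ∧ tlen n w = l := Iff.rfl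
  rw [hXl, mem_Xset_iff hn, and_assoc]
  refine and_congr_right fun hw => ?_
  rw [tlen_eq_card_negatives hn hw]
  constructor
  · rintro ⟨hmono, rfl⟩
    refine ⟨fun x hx => ?_, hmono.mono (Set.Icc_subset_Icc_right (by omega)),
      hmono.mono (Set.Icc_subset_Icc_left (by omega))⟩
    have hmem := Finset.ext_iff.1 (negatives_eq_Icc hmono) x
    rw [mem_negatives, Finset.mem_Icc] at hmem
    rcases le_or_gt x n with hxn | hxn
    · omega
    · rw [apply_of_lt hw hxn]
      omega
  · rintro ⟨hneg, hblocks⟩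
    refine ⟨fun x hx y hy hxy => ?_, ?_⟩
    · rw [Set.mem_Icc] at hx hy
      have hnegx := hneg x (by omega)
      have hnegy := hneg y (by omega)
      by_cases hsame : (l : ℤ) < x ↔ (l : ℤ) < y
      · exact hblocks.apply_lt (by omega) hxy hy.2 hsame
      · omega
    · have : negatives n w = Finset.Icc 1 (l : ℤ) := by
        ext x
        have := hneg x
        rw [mem_negatives, Finset.mem_Icc]
        omega
      simp [this]

/-! ### The element `a_l` -/

theorem rgen_succ_apply (l : ℕ) (x : ℤ) : rgen (l + 1) x =
    if x = 1 then -(l + 1 : ℤ) else if x = -1 then (l + 1 : ℤ)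
    else if 2 ≤ x ∧ x ≤ l + 1 then x - 1
    else if -(l + 1) ≤ x ∧ x ≤ -2 then x + 1 else x := by
  induction l with
  | zero =>
    simp only [rgen, tgen_apply]
    split_ifs <;> omega
  | succ l ih =>
    rw [rgen, Equiv.Perm.mul_apply, ih, sgen_apply (by omega)]
    push_cast
    split_ifs <;> omega

theorem al_apply (l : ℕ) (x : ℤ) : al l x =
    if 1 ≤ x ∧ x ≤ l then x - (l + 1) else if -l ≤ x ∧ x ≤ -1 then x + (l + 1) else x := by
  induction l generalizing x with
  | zero =>
    rw [al, List.range_zero, List.map_nil, List.prod_nil, Equiv.Perm.one_apply]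
    split_ifs <;> omega
  | succ l ih =>
    have hsucc : al (l + 1) = al l * rgen (l + 1) := by simp [al, List.range_succ]
    rw [hsucc, Equiv.Perm.mul_apply, ih, rgen_succ_apply]
    push_cast
    split_ifs <;> omega

theorem al_mem_signedPerm (hl : l ≤ n) : al l ∈ signedPerm n := by
  refine ⟨fun x => ?_, fun x hx => ?_⟩
  · simp only [al_apply]
    split_ifs <;> omega
  · rw [lt_abs] at hx
    simp only [al_apply]
    split_ifs <;> omega

theorem mul_al_apply_of_le (hw : w ∈ signedPerm n) (hx : 1 ≤ x) (hxl : x ≤ l) :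
    (w * al l) x = -w (l + 1 - x) := by
  rw [Equiv.Perm.mul_apply, al_apply, if_pos ⟨hx, hxl⟩, ← apply_neg hw, neg_sub]

theorem mul_al_apply_of_lt (w : P) (hx : (l : ℤ) < x) : (w * al l) x = w x := by
  rw [Equiv.Perm.mul_apply, al_apply, if_neg (by omega), if_neg (by omega)]

theorem increasingOnBlocks_mul_al_iff (hw : w ∈ signedPerm n) :
    IncreasingOnBlocks n l (w * al l) ↔ IncreasingOnBlocks n l w := by
  refine and_congr ⟨fun h x hx y hy hxy => ?_, fun h x hx y hy hxy => ?_⟩ ?_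
  · rw [Set.mem_Icc] at hx hy
    have := @h (l + 1 - y) (Set.mem_Icc.2 (by omega)) (l + 1 - x) (Set.mem_Icc.2 (by omega))
      (by omega)
    rwa [mul_al_apply_of_le hw (by omega) (by omega), mul_al_apply_of_le hw (by omega) (by omega),
      neg_lt_neg_iff, sub_sub_cancel, sub_sub_cancel] at this
  · rw [mul_al_apply_of_le hw hx.1 hx.2, mul_al_apply_of_le hw hy.1 hy.2, neg_lt_neg_iff]
    rw [Set.mem_Icc] at hx hy
    exact h (Set.mem_Icc.2 (by omega)) (Set.mem_Icc.2 (by omega)) (by omega)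
  · refine Set.EqOn.congr_strictMonoOn fun x hx => mul_al_apply_of_lt w ?_
    rw [Set.mem_Icc] at hx
    omega

theorem forall_mul_al_neg_iff (hw : w ∈ signedPerm n) :
    (∀ x, 0 < x → ((w * al l) x < 0 ↔ x ≤ l)) ↔ ∀ x, 0 < x → 0 < w x := by
  have hne (x : ℤ) (hx : 0 < x) : w x ≠ 0 := fun h =>
    hx.ne' (w.injective (h.trans (apply_zero hw).symm))
  refine ⟨fun h x hx => ?_, fun h x hx => ?_⟩
  · rcases le_or_gt x l with hxl | hxl
    · have := h (l + 1 - x) (by omega)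
      rw [mul_al_apply_of_le hw (by omega) (by omega), sub_sub_cancel] at this
      omega
    · have hzero := hne x hx
      have := h x hx
      rw [mul_al_apply_of_lt w hxl] at this
      omega
  · rcases le_or_gt x l with hxl | hxl
    · have := h (l + 1 - x) (by omega)
      rw [mul_al_apply_of_le hw (by omega) hxl]
      omega
    · have := h x hx
      rw [mul_al_apply_of_lt w hxl]
      omega

theorem mul_al_mem_Xl_iff (hn : 1 ≤ n) (hl : l ≤ n) : w * al l ∈ Xl n l ↔ w ∈ Yset n l := by
  rw [mem_Xl_iff hn hl, mem_Yset_iff hn hl, Subgroup.mul_mem_cancel_right _ (al_mem_signedPerm hl)]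
  exact and_congr_right fun hw =>
    and_congr (forall_mul_al_neg_iff hw) (increasingOnBlocks_mul_al_iff hw)

end Hyperoctahedral

/-- For `0 ≤ l ≤ n`, the map `Y_{l,n-l} → X_n^{(l)}`, `w ↦ w a_l`,
is a bijection. -/
theorem Y_mul_al_bij (n l : ℕ) (hn : 1 ≤ n) (hl : l ≤ n) :
    Set.BijOn (fun w => w * al l) (Yset n l) (Xl n l) :=
  (Equiv.mulRight (al l)).bijOn fun _ => Hyperoctahedral.mul_al_mem_Xl_iff hn hl
end

section
/- For all w, w′ ∈ W_n, the relations w ↔_L w′ and w ⇝_L w′ are equivalent. -/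
open scoped Classical

/-! Write `w ∈ W_n` as the word `w⁻¹ 1, …, w⁻¹ n`. An elementary relation `x —s→ y` is then either
a Knuth transformation or the exchange of adjacent letters of opposite signs. Such exchanges sort
a word into its negative letters followed by its positive ones, while a Knuth transformation
induces at most one on the letters of an interval, so the class of `w` under `↔_L` is determined
by the Knuth classes of its subwords of negative and of positive letters. In `w = a a_l σ b⁻¹` the
factor `a` only shuffles these two subwords, and `b` relabels each of them monotonically. Hence,
for fixed `b`, their Knuth classes are determined by those of the two blocks of `σ⁻¹`, which
determine the class of `σ`. Finally `b` depends only on the set of negative letters, which is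
constant along `↔_L`. -/

namespace SignedPerm

/-! ### Knuth equivalence of words -/

section Knuth

open Relation

lemma eqvGen_lift {α β : Type*} {r : α → α → Prop} {s : β → β → Prop} {f : α → β}
    (h : ∀ a b, r a b → EqvGen s (f a) (f b)) {a b : α} (hab : EqvGen r a b) :
    EqvGen s (f a) (f b) := by
  induction hab with
  | rel a b hab => exact h a b hab
  | refl a => exact .refl _
  | symm a b _ ih => exact ih.symm _ _
  | trans a b c _ _ ih₁ ih₂ => exact ih₁.trans _ _ _ ih₂

variable {α β : Type*} [Preorder α] [Preorder β] {s : Set α} {f : α → β} {u u' v v' : List α}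

/-- An elementary Knuth transformation: for `a < b < c`, adjacent letters `a c` are exchanged next
to a letter `b`. -/
inductive KnuthMove : List α → List α → Prop
  | bac (u v : List α) {a b c : α} (hab : a < b) (hbc : b < c) :
    KnuthMove (u ++ b :: a :: c :: v) (u ++ b :: c :: a :: v)
  | acb (u v : List α) {a b c : α} (hab : a < b) (hbc : b < c) :
    KnuthMove (u ++ a :: c :: b :: v) (u ++ c :: a :: b :: v)

/-- Knuth equivalence of words. -/
abbrev KnuthEquiv : List α → List α → Prop := EqvGen KnuthMove

lemma KnuthMove.perm (h : KnuthMove u v) : u.Perm v := by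
  cases h with
  | bac u v => exact .append_left _ (.cons _ (.swap _ _ _))
  | acb u v => exact .append_left _ (.swap _ _ _)

lemma KnuthEquiv.perm (h : KnuthEquiv u v) : u.Perm v :=
  (List.Perm.eqv α).eqvGen_iff.1 (EqvGen.mono (fun _ _ => KnuthMove.perm) _ _ h)

lemma KnuthMove.append_left (w : List α) (h : KnuthMove u v) : KnuthMove (w ++ u) (w ++ v) := by
  cases h with rw [← List.append_assoc, ← List.append_assoc]
  | bac u v hab hbc => exact .bac (w ++ u) v hab hbc
  | acb u v hab hbc => exact .acb (w ++ u) v hab hbc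

lemma KnuthMove.append_right (w : List α) (h : KnuthMove u v) : KnuthMove (u ++ w) (v ++ w) := by
  cases h with
  | bac u v hab hbc => simpa using .bac u (v ++ w) hab hbc
  | acb u v hab hbc => simpa using .acb u (v ++ w) hab hbc

lemma KnuthEquiv.append (h : KnuthEquiv u v) (h' : KnuthEquiv u' v') :
    KnuthEquiv (u ++ u') (v ++ v') :=
  .trans _ (v ++ u') _
    (eqvGen_lift (f := (· ++ u')) (fun _ _ h => .rel _ _ (h.append_right u')) h)
    (eqvGen_lift (f := (v ++ ·)) (fun _ _ h => .rel _ _ (h.append_left v)) h')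

lemma KnuthMove.map (hf : StrictMonoOn f s) (hu : ∀ x ∈ u, x ∈ s) (h : KnuthMove u v) :
    KnuthMove (u.map f) (v.map f) := by
  cases h with
  | bac u v hab hbc =>
    simpa using .bac (u.map f) (v.map f) (hf (hu _ (by simp)) (hu _ (by simp)) hab)
      (hf (hu _ (by simp)) (hu _ (by simp)) hbc)
  | acb u v hab hbc =>
    simpa using .acb (u.map f) (v.map f) (hf (hu _ (by simp)) (hu _ (by simp)) hab)
      (hf (hu _ (by simp)) (hu _ (by simp)) hbc)

lemma KnuthEquiv.map (hf : StrictMonoOn f s) (hu : ∀ x ∈ u, x ∈ s) (h : KnuthEquiv u v) :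
    KnuthEquiv (u.map f) (v.map f) := by
  induction h with
  | rel u v h => exact .rel _ _ (h.map hf hu)
  | refl u => exact .refl _
  | symm u v h ih => exact (ih fun x hx => hu x ((KnuthEquiv.perm h).mem_iff.1 hx)).symm
  | trans u v w h _ ih₁ ih₂ =>
    exact (ih₁ hu).trans _ _ _ (ih₂ fun x hx => hu x ((KnuthEquiv.perm h).mem_iff.2 hx))

lemma KnuthMove.reverse_map (hf : StrictAnti f) (h : KnuthMove u v) :
    KnuthMove (u.reverse.map f) (v.reverse.map f) := by
  cases h with
  | bac u v hab hbc => simpa using .acb (v.map f).reverse (u.map f).reverse (hf hbc) (hf hab)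
  | acb u v hab hbc => simpa using .bac (v.map f).reverse (u.map f).reverse (hf hbc) (hf hab)

lemma KnuthEquiv.reverse_map (hf : StrictAnti f) (h : KnuthEquiv u v) :
    KnuthEquiv (u.reverse.map f) (v.reverse.map f) :=
  eqvGen_lift (f := fun u => u.reverse.map f) (fun _ _ h => .rel _ _ (h.reverse_map hf)) h

lemma KnuthMove.filter {p : α → Bool} (hp : {x | p x}.OrdConnected) (h : KnuthMove u v) :
    KnuthEquiv (u.filter p) (v.filter p) := by
  cases h with
  | bac u v hab hbc | acb u v hab hbc =>
    rename_i a b c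
    have hb : p a → p c → p b := fun ha hc => hp.out ha hc ⟨hab.le, hbc.le⟩
    simp only [List.filter_append, List.filter_cons]
    by_cases ha : p a <;> by_cases hc : p c
    · simp only [ha, hc, hb ha hc, if_true]
      first | exact .rel _ _ (.bac _ _ hab hbc) | exact .rel _ _ (.acb _ _ hab hbc)
    all_goals simp only [ha, hc, if_true]; exact .refl _

lemma KnuthEquiv.filter {p : α → Bool} (hp : {x | p x}.OrdConnected) (h : KnuthEquiv u v) :
    KnuthEquiv (u.filter p) (v.filter p) :=
  eqvGen_lift (fun _ _ h => h.filter hp) h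

end Knuth

section KnuthLinear

open Relation

variable {α β : Type*} [LinearOrder α] [Preorder β] {s : Set α} {f : α → β} {u v : List α}

lemma knuthEquiv_map_iff [Nonempty α] (hf : StrictMonoOn f s) (hu : ∀ x ∈ u, x ∈ s)
    (hv : ∀ x ∈ v, x ∈ s) : KnuthEquiv (u.map f) (v.map f) ↔ KnuthEquiv u v := by
  refine ⟨fun h => ?_, fun h => h.map hf hu⟩
  have hinv : StrictMonoOn (Function.invFunOn f s) (f '' s) := by
    rintro _ ⟨x, hx, rfl⟩ _ ⟨y, hy, rfl⟩ hxy
    rw [hf.injOn.leftInvOn_invFunOn hx, hf.injOn.leftInvOn_invFunOn hy]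
    exact (hf.lt_iff_lt hx hy).1 hxy
  have hmap : ∀ w : List α, (∀ x ∈ w, x ∈ s) → (w.map f).map (Function.invFunOn f s) = w :=
    fun w hw => by
      rw [List.map_map]
      conv_rhs => rw [← List.map_id w]
      exact List.map_congr_left fun x hx => hf.injOn.leftInvOn_invFunOn (hw x hx)
  rw [← hmap u hu, ← hmap v hv]
  exact h.map hinv (List.forall_mem_map.2 fun x hx => Set.mem_image_of_mem f (hu x hx))

lemma knuthEquiv_append_iff {u' v' : List α} {t : α} (hu : ∀ x ∈ u, x ≤ t) (hu' : ∀ x ∈ u', t < x)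
    (hv : ∀ x ∈ v, x ≤ t) (hv' : ∀ x ∈ v', t < x) :
    KnuthEquiv (u ++ u') (v ++ v') ↔ KnuthEquiv u v ∧ KnuthEquiv u' v' := by
  have hfilter : ∀ w w' : List α, (∀ x ∈ w, x ≤ t) → (∀ x ∈ w', t < x) →
      (w ++ w').filter (· ≤ t) = w ∧ (w ++ w').filter (t < ·) = w' := fun w w' hw hw' => by
    constructor <;> rw [List.filter_append]
    · rw [List.filter_eq_self.2 (by simpa using hw), List.filter_eq_nil_iff.2 (by simpa using hw'),
        List.append_nil]
    · rw [List.filter_eq_nil_iff.2 (by simpa using hw), List.filter_eq_self.2 (by simpa using hw'),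
        List.nil_append]
  refine ⟨fun h => ⟨?_, ?_⟩, fun h => h.1.append h.2⟩
  · rw [← (hfilter u u' hu hu').1, ← (hfilter v v' hv hv').1]
    exact h.filter (by simpa using! Set.ordConnected_Iic)
  · rw [← (hfilter u u' hu hu').2, ← (hfilter v v' hv hv').2]
    exact h.filter (by simpa using! Set.ordConnected_Ioi)

variable [Zero α]

/-- The exchange of adjacent letters of opposite signs. -/
inductive SignMove : List α → List α → Prop
  | mk (u v : List α) {a b : α} (ha : a < 0) (hb : 0 < b) :
    SignMove (u ++ a :: b :: v) (u ++ b :: a :: v)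

/-- The moves on one-line words of signed permutations: Knuth transformations and exchanges of
adjacent letters of opposite signs. -/
def SignedMove (u v : List α) : Prop := KnuthMove u v ∨ SignMove u v

/-- The equivalence generated by the moves `SignedMove`. -/
abbrev SignedEquiv : List α → List α → Prop := EqvGen SignedMove

lemma SignedMove.append_left (w : List α) (h : SignedMove u v) : SignedMove (w ++ u) (w ++ v) := by
  rcases h with h | ⟨u, v, ha, hb⟩
  · exact .inl (h.append_left w)
  · rw [← List.append_assoc, ← List.append_assoc]
    exact .inr (.mk (w ++ u) v ha hb)

lemma SignedEquiv.append_left (w : List α) (h : SignedEquiv u v) :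
    SignedEquiv (w ++ u) (w ++ v) :=
  eqvGen_lift (f := (w ++ ·)) (fun _ _ h => .rel _ _ (h.append_left w)) h

lemma SignMove.filter {p : α → Bool} (hp : ∀ a b, a < 0 → 0 < b → p a → ¬ p b)
    (h : SignMove u v) : u.filter p = v.filter p := by
  obtain ⟨u, v, ha, hb⟩ := h
  have := hp _ _ ha hb
  simp only [List.filter_append, List.filter_cons]
  grind

lemma SignedEquiv.filter {p : α → Bool} (hp : {x | p x}.OrdConnected)
    (hp' : ∀ a b, a < 0 → 0 < b → p a → ¬ p b) (h : SignedEquiv u v) :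
    KnuthEquiv (u.filter p) (v.filter p) :=
  eqvGen_lift (fun _ _ h => h.elim (fun h => h.filter hp) fun h => h.filter hp' ▸ .refl _) h

lemma SignedEquiv.cons_append {a : α} (ha : 0 < a) (hu : ∀ x ∈ u, x < 0) :
    SignedEquiv (a :: (u ++ v)) (u ++ a :: v) := by
  induction u with
  | nil => exact .refl _
  | cons b u ih =>
    have hswap : SignedEquiv (a :: b :: (u ++ v)) (b :: a :: (u ++ v)) :=
      .symm _ _ (.rel _ _ (.inr (.mk [] _ (hu b (by simp)) ha)))
    exact hswap.trans _ _ _ (SignedEquiv.append_left [b] (ih fun x hx => hu x (by simp [hx])))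

lemma signedEquiv_filter_append_filter (hu : ∀ x ∈ u, x ≠ 0) :
    SignedEquiv u (u.filter (· < 0) ++ u.filter (0 < ·)) := by
  induction u with
  | nil => exact .refl _
  | cons a u ih =>
    have htail : SignedEquiv (a :: u) (a :: (u.filter (· < 0) ++ u.filter (0 < ·))) :=
      .append_left [a] (ih fun x hx => hu x (by simp [hx]))
    rcases (hu a (by simp)).lt_or_gt with ha | ha
    · simpa [ha, ha.not_gt] using htail
    · simpa [ha, ha.not_gt] using
        htail.trans _ _ _ (SignedEquiv.cons_append ha fun x hx => by
          simpa using (List.mem_filter.1 hx).2)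

theorem signedEquiv_iff (hu : ∀ x ∈ u, x ≠ 0) (hv : ∀ x ∈ v, x ≠ 0) :
    SignedEquiv u v ↔ KnuthEquiv (u.filter (· < 0)) (v.filter (· < 0)) ∧
      KnuthEquiv (u.filter (0 < ·)) (v.filter (0 < ·)) := by
  constructor
  · refine fun h => ⟨h.filter ?_ ?_, h.filter ?_ ?_⟩
    · simp only [decide_eq_true_eq]
      exact Set.ordConnected_Iio
    · simpa using fun a b _ hb _ => hb.le
    · simp only [decide_eq_true_eq]
      exact Set.ordConnected_Ioi
    · simpa using fun a b ha _ ha' => (ha.not_gt ha').elim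
  · rintro ⟨hneg, hpos⟩
    have happend : SignedEquiv (u.filter (· < 0) ++ u.filter (0 < ·))
        (v.filter (· < 0) ++ v.filter (0 < ·)) :=
      EqvGen.mono (fun _ _ => .inl) _ _ (hneg.append hpos)
    exact (signedEquiv_filter_append_filter hu).trans _ _ _
      (happend.trans _ _ _ ((signedEquiv_filter_append_filter hv).symm _ _))

lemma signedEquiv_iff_of_pos (hu : ∀ x ∈ u, 0 < x) (hv : ∀ x ∈ v, 0 < x) :
    SignedEquiv u v ↔ KnuthEquiv u v := by
  have hnil : ∀ w : List α, (∀ x ∈ w, 0 < x) → w.filter (· < 0) = [] := fun w hw =>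
    List.filter_eq_nil_iff.2 fun x hx => by simpa using (hw x hx).le
  rw [signedEquiv_iff (fun x hx => (hu x hx).ne') (fun x hx => (hv x hx).ne'), hnil u hu, hnil v hv,
    List.filter_eq_self.2 (by simpa using hu), List.filter_eq_self.2 (by simpa using hv)]
  exact and_iff_right (.refl _)

end KnuthLinear

/-! ### Signed permutations -/

/-- The group `W_n`, so that membership in `Wset n` can use the `Subgroup` API. -/
def hyperoctahedral (n : ℕ) : Subgroup P where
  carrier := Wset n
  one_mem' := ⟨fun _ => rfl, fun _ _ => rfl⟩
  mul_mem' {x y} hx hy :=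
    ⟨fun i => by simp [hy.1, hx.1], fun i hi => by simp [hy.2 i hi, hx.2 i hi]⟩
  inv_mem' {x} hx :=
    ⟨fun i => Equiv.Perm.inv_eq_iff_eq.2 (by simp [hx.1]),
      fun i hi => Equiv.Perm.inv_eq_iff_eq.2 (hx.2 i hi).symm⟩

variable {n l i j : ℕ} {w x y g : P} {p q : ℤ}

lemma apply_inv_self (x : P) (p : ℤ) : x (x⁻¹ p) = p := x.apply_symm_apply p

lemma inv_apply_self (x : P) (p : ℤ) : x⁻¹ (x p) = p := x.symm_apply_apply p

lemma map_neg (hw : w ∈ hyperoctahedral n) (p : ℤ) : w (-p) = -w p := hw.1 p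

lemma map_zero (hw : w ∈ hyperoctahedral n) : w 0 = 0 := by
  have h := map_neg hw 0
  rw [neg_zero] at h
  omega

lemma map_of_lt (hw : w ∈ hyperoctahedral n) (hp : n < p) : w p = p :=
  hw.2 p (hp.trans_le (le_abs_self p))

lemma map_eq_zero_iff (hw : w ∈ hyperoctahedral n) : w p = 0 ↔ p = 0 := by
  rw [← map_zero hw, w.injective.eq_iff, map_zero hw]

lemma abs_map_le (hw : w ∈ hyperoctahedral n) (hp : |p| ≤ n) : |w p| ≤ n := by
  by_contra! h
  rw [w.injective (hw.2 _ h)] at h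
  omega

lemma hyperoctahedral_mono {m : ℕ} (h : n ≤ m) : hyperoctahedral n ≤ hyperoctahedral m :=
  fun _ hw => ⟨hw.1, fun p hp => hw.2 p (lt_of_le_of_lt (by exact_mod_cast h) hp)⟩

lemma ext_of_pos (hx : x ∈ hyperoctahedral n) (hy : y ∈ hyperoctahedral n)
    (h : ∀ p : ℤ, 0 < p → p ≤ n → x p = y p) : x = y := by
  have hpos : ∀ p : ℤ, 0 < p → x p = y p := fun p hp => by
    rcases le_or_gt p n with hpn | hpn
    · exact h p hp hpn
    · rw [map_of_lt hx hpn, map_of_lt hy hpn]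
  ext p
  rcases lt_trichotomy p 0 with hp | rfl | hp
  · have := hpos (-p) (by omega)
    rw [map_neg hx, map_neg hy] at this
    omega
  · rw [map_zero hx, map_zero hy]
  · exact hpos p hp

lemma sgen_apply (hi : 1 ≤ i) (p : ℤ) : sgen i p =
    if p = i then p + 1 else if p = i + 1 then p - 1 else
    if p = -i then p - 1 else if p = -(i + 1) then p + 1 else p := by
  simp only [sgen, Equiv.Perm.mul_apply, Equiv.swap_apply_def]
  split_ifs <;> omega

lemma sgen_apply_self (hi : 1 ≤ i) : sgen i (i : ℤ) = i + 1 := by simp [sgen_apply hi]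

lemma sgen_apply_succ (hi : 1 ≤ i) : sgen i ((i : ℤ) + 1) = i := by simp [sgen_apply hi]

lemma sgen_apply_of_ne (hi : 1 ≤ i) (hp : 0 ≤ p) (h : p ≠ i) (h' : p ≠ i + 1) :
    sgen i p = p := by
  rw [sgen_apply hi]
  grind

lemma sgen_inv (hi : 1 ≤ i) : (sgen i)⁻¹ = sgen i := by
  refine inv_eq_of_mul_eq_one_left (Equiv.ext fun p => ?_)
  simp only [Equiv.Perm.mul_apply, sgen_apply hi, Equiv.Perm.one_apply]
  grind

lemma ttgen_apply (j : ℕ) (p : ℤ) :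
    ttgen j p = if p = j then -p else if p = -j then -p else p := by
  simp only [ttgen, Equiv.swap_apply_def]
  split_ifs <;> omega

lemma ttgen_apply_self (j : ℕ) : ttgen j (j : ℤ) = -j := by simp [ttgen_apply]

lemma ttgen_inv (j : ℕ) : (ttgen j)⁻¹ = ttgen j := Equiv.swap_inv _ _

lemma ttgen_one : ttgen 1 = tgen := by simp [ttgen, tgen]

lemma sgen_mem (hi : 1 ≤ i) (hin : i < n) : sgen i ∈ hyperoctahedral n := by
  refine ⟨fun p => ?_, fun p hp => ?_⟩ <;> simp only [sgen_apply hi] <;> grind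

lemma ttgen_mem (hjn : j ≤ n) : ttgen j ∈ hyperoctahedral n := by
  refine ⟨fun p => ?_, fun p hp => ?_⟩ <;> simp only [ttgen_apply] <;> grind

lemma tgen_mem (hn : 1 ≤ n) : tgen ∈ hyperoctahedral n := ttgen_one ▸ ttgen_mem hn

lemma sgen_mul_sgen_mul (hi : 1 ≤ i) : sgen i * (sgen i * x) = x := by
  rw [← mul_assoc, mul_eq_one_iff_eq_inv.2 (sgen_inv hi).symm, one_mul]

lemma sgen_mul_inv_apply_self (hi : 1 ≤ i) : (sgen i * x)⁻¹ i = x⁻¹ (i + 1) := by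
  rw [mul_inv_rev, sgen_inv hi, Equiv.Perm.mul_apply, sgen_apply_self hi]

lemma sgen_mul_inv_apply_succ (hi : 1 ≤ i) : (sgen i * x)⁻¹ (i + 1) = x⁻¹ i := by
  rw [mul_inv_rev, sgen_inv hi, Equiv.Perm.mul_apply, sgen_apply_succ hi]

lemma ttgen_mul_ttgen_mul : ttgen j * (ttgen j * x) = x := by
  rw [← mul_assoc, mul_eq_one_iff_eq_inv.2 (ttgen_inv j).symm, one_mul]

lemma ttgen_mul_inv_apply_self (hx : x ∈ hyperoctahedral n) :
    (ttgen j * x)⁻¹ j = -x⁻¹ j := by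
  rw [mul_inv_rev, ttgen_inv, Equiv.Perm.mul_apply, ttgen_apply_self, map_neg (inv_mem hx)]

lemma ttgen_mul_inv_apply_succ (hj : 1 ≤ j) : (ttgen j * x)⁻¹ (j + 1) = x⁻¹ (j + 1) := by
  rw [mul_inv_rev, ttgen_inv, Equiv.Perm.mul_apply, ttgen_apply, if_neg (by omega),
    if_neg (by omega)]

lemma ttgen_succ (hj : 1 ≤ j) : ttgen (j + 1) = sgen j * (ttgen j * sgen j) := by
  ext p
  simp only [Equiv.Perm.mul_apply, sgen_apply hj, ttgen_apply]
  grind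

lemma sgen_ne_tgen (hi : 1 ≤ i) : sgen i ≠ tgen := fun h => by
  have h₁ := congrArg (fun π : P => π 1) h
  simp only [sgen_apply hi, ← ttgen_one, ttgen_apply] at h₁
  grind

lemma mem_Icc_iff_lt : i ∈ Set.Icc 1 (n - 1) ↔ 1 ≤ i ∧ i < n := by
  rw [Set.mem_Icc]
  omega

/-! ### Inversions and length -/

/-- The inversions of `w`, over all pairs of integers. The pairs that contain `0` are kept, so that
for `w ∈ W_n` there are `2 ℓ(w) + ℓ_t(w)` of them. -/
def inversions (w : P) : Set (ℤ × ℤ) := {p | p.1 < p.2 ∧ w p.2 < w p.1}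

/-- The positive integers that `w` makes negative; for `w ∈ W_n` there are `ℓ_t(w)` of them. -/
def negs (w : P) : Set ℤ := {p | 0 < p ∧ w p < 0}

/-- Every inversion of `y` is an inversion of `x * y`: this is how `ℓ(x y) = ℓ(x) + ℓ(y)` is
recognised. -/
def NoCancel (x y : P) : Prop := ∀ p q, p < q → y q < y p → x (y q) < x (y p)

lemma inversions_finite (hw : w ∈ hyperoctahedral n) : (inversions w).Finite := by
  refine ((Set.finite_Icc (-n : ℤ) n).prod (Set.finite_Icc (-n : ℤ) n)).subset ?_
  rintro ⟨p, q⟩ ⟨hpq, hw'⟩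
  have hp := hw.2 p
  have hq := hw.2 q
  have hp' := @abs_map_le n w p hw
  have hq' := @abs_map_le n w q hw
  simp only [abs_le, lt_abs] at hp hq hp' hq'
  simp only at hpq hw'
  simp only [Set.mem_prod, Set.mem_Icc]
  omega

lemma negs_subset (hw : w ∈ hyperoctahedral n) : negs w ⊆ Set.Icc 1 n := by
  rintro p ⟨hp, hwp⟩
  refine ⟨hp, ?_⟩
  by_contra! h
  rw [map_of_lt hw h] at hwp
  omega

lemma negs_finite (hw : w ∈ hyperoctahedral n) : (negs w).Finite :=
  (Set.finite_Icc _ _).subset (negs_subset hw)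

lemma ncard_negs_le (hw : w ∈ hyperoctahedral n) : (negs w).ncard ≤ n := by
  simpa [Set.ncard_eq_toFinset_card'] using
    Set.ncard_le_ncard (negs_subset hw) (Set.finite_Icc _ _)

lemma noCancel_iff : NoCancel x y ↔ ∀ p ∈ inversions x, y⁻¹ p.1 < y⁻¹ p.2 := by
  constructor
  · rintro h ⟨p, q⟩ ⟨hpq, hx⟩
    simp only at hpq hx
    by_contra! h'
    have := h _ _ (h'.lt_of_ne (by simpa using hpq.ne')) (by simpa using hpq)
    simp only [apply_inv_self] at this
    omega
  · intro h p q hpq hy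
    by_contra! h'
    have := h (y q, y p) ⟨hy, h'.lt_of_ne (by simpa using hpq.ne)⟩
    simp only [inv_apply_self] at this
    omega

lemma NoCancel.inversions_mul (h : NoCancel x y) :
    inversions (x * y) = inversions y ∪ Prod.map y y ⁻¹' inversions x := by
  ext ⟨p, q⟩
  have := h p q
  have := h q p
  have : y p = y q ↔ p = q := y.injective.eq_iff
  have : x (y p) = x (y q) ↔ y p = y q := x.injective.eq_iff
  simp only [inversions, Set.mem_ofPred_eq, Set.mem_union, Set.mem_preimage, Prod.map_apply,
    Equiv.Perm.mul_apply]
  grind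

lemma NoCancel.ncard_inversions_mul (h : NoCancel x y) (hx : x ∈ hyperoctahedral n)
    (hy : y ∈ hyperoctahedral n) :
    (inversions (x * y)).ncard = (inversions x).ncard + (inversions y).ncard := by
  have hbij : Function.Bijective (Prod.map y y) := y.bijective.prodMap y.bijective
  rw [h.inversions_mul, Set.ncard_union_eq ?_ (inversions_finite hy)
    ((inversions_finite hx).preimage hbij.injective.injOn),
    Set.ncard_preimage_of_injective_subset_range hbij.injective
      (by simp [hbij.surjective.range_eq]), add_comm]
  exact Set.disjoint_left.2 fun p hp hp' => lt_asymm hp.2 hp'.1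

lemma NoCancel.negs_mul (h : NoCancel x y) (hx : x ∈ hyperoctahedral n)
    (hy : y ∈ hyperoctahedral n) : negs (x * y) = negs y ∪ y ⁻¹' negs x := by
  ext p
  have h₁ := h p (-p)
  have h₂ := h (-p) p
  have h₃ : y p = 0 ↔ p = 0 := map_eq_zero_iff hy
  simp only [map_neg hy, map_neg hx] at h₁ h₂
  simp only [negs, Set.mem_ofPred_eq, Set.mem_union, Set.mem_preimage, Equiv.Perm.mul_apply]
  grind

lemma NoCancel.ncard_negs_mul (h : NoCancel x y) (hx : x ∈ hyperoctahedral n)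
    (hy : y ∈ hyperoctahedral n) : (negs (x * y)).ncard = (negs x).ncard + (negs y).ncard := by
  rw [h.negs_mul hx hy, Set.ncard_union_eq ?_ (negs_finite hy)
    ((negs_finite hx).preimage y.injective.injOn),
    Set.ncard_preimage_of_injective_subset_range y.injective
      (by simp [y.surjective.range_eq]), add_comm]
  exact Set.disjoint_left.2 fun p hp hp' => lt_asymm hp.2 hp'.1

lemma inversions_sgen (hi : 1 ≤ i) :
    inversions (sgen i) = {((i : ℤ), (i + 1 : ℤ)), (-(i + 1 : ℤ), -(i : ℤ))} := by
  ext ⟨p, q⟩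
  simp only [inversions, sgen_apply hi, Set.mem_ofPred_eq, Set.mem_insert_iff,
    Set.mem_singleton_iff, Prod.mk.injEq]
  grind

lemma negs_sgen (hi : 1 ≤ i) : negs (sgen i) = ∅ := by
  ext p
  simp only [negs, sgen_apply hi, Set.mem_ofPred_eq, Set.mem_empty_iff_false]
  grind

lemma inversions_tgen : inversions tgen = {(-1, 0), (0, 1), (-1, 1)} := by
  ext ⟨p, q⟩
  simp only [inversions, ← ttgen_one, ttgen_apply, Set.mem_ofPred_eq, Set.mem_insert_iff,
    Set.mem_singleton_iff, Prod.mk.injEq]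
  grind

lemma negs_tgen : negs tgen = {1} := by
  ext p
  simp only [negs, ← ttgen_one, ttgen_apply, Set.mem_ofPred_eq, Set.mem_singleton_iff]
  grind

lemma noCancel_sgen_iff (hi : 1 ≤ i) (hx : x ∈ hyperoctahedral n) :
    NoCancel (sgen i) x ↔ x⁻¹ i < x⁻¹ (i + 1) := by
  simp only [noCancel_iff, inversions_sgen hi, Set.mem_insert_iff, Set.mem_singleton_iff,
    forall_eq_or_imp, forall_eq, map_neg (inv_mem hx), neg_lt_neg_iff, and_self]

lemma noCancel_tgen_iff (hx : x ∈ hyperoctahedral n) : NoCancel tgen x ↔ 0 < x⁻¹ 1 := by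
  simp only [noCancel_iff, inversions_tgen, Set.mem_insert_iff, Set.mem_singleton_iff,
    forall_eq_or_imp, forall_eq, map_neg (inv_mem hx), map_zero (inv_mem hx)]
  omega

lemma sgen_mem_Sset (hi : 1 ≤ i) (hin : i < n) : sgen i ∈ Sset n :=
  Or.inr ⟨i, mem_Icc_iff_lt.2 ⟨hi, hin⟩, rfl⟩

lemma Sset_subset (n : ℕ) : Sset n ⊆ hyperoctahedral (max n 1) := by
  rintro _ (rfl | ⟨i, hi, rfl⟩)
  · exact tgen_mem (le_max_right n 1)
  · rw [mem_Icc_iff_lt] at hi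
    exact sgen_mem hi.1 (lt_max_of_lt_left hi.2)

lemma mul_mul_of_mem_Sset (hg : g ∈ Sset n) : g * (g * x) = x := by
  rcases hg with rfl | ⟨i, hi, rfl⟩
  · rw [← ttgen_one, ttgen_mul_ttgen_mul]
  · exact sgen_mul_sgen_mul hi.1

lemma noCancel_or {m : ℕ} (hg : g ∈ Sset n) (hx : x ∈ hyperoctahedral m) :
    NoCancel g x ∨ NoCancel g (g * x) := by
  have hgx : g * x ∈ hyperoctahedral (max m (max n 1)) :=
    mul_mem (hyperoctahedral_mono (le_max_right _ _) (Sset_subset n hg))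
      (hyperoctahedral_mono (le_max_left _ _) hx)
  rcases hg with rfl | ⟨i, hi, rfl⟩
  · have h0 := map_eq_zero_iff (p := 1) (inv_mem hx)
    have h1 := ttgen_mul_inv_apply_self (j := 1) hx
    simp only [ttgen_one, Nat.cast_one] at h1
    rw [noCancel_tgen_iff hx, noCancel_tgen_iff hgx, h1]
    omega
  · rw [mem_Icc_iff_lt] at hi
    rw [noCancel_sgen_iff hi.1 hx, noCancel_sgen_iff hi.1 hgx,
      sgen_mul_inv_apply_self hi.1, sgen_mul_inv_apply_succ hi.1]
    exact lt_or_gt_of_ne (by simp)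

lemma ncard_negs_of_mem_Sset (hg : g ∈ Sset n) :
    (negs g).ncard = if g = tgen then 1 else 0 := by
  rcases hg with rfl | ⟨i, hi, rfl⟩
  · rw [negs_tgen, Set.ncard_singleton, if_pos rfl]
  · rw [negs_sgen hi.1, Set.ncard_empty, if_neg (sgen_ne_tgen hi.1)]

lemma ncard_inversions_of_mem_Sset (hg : g ∈ Sset n) :
    (inversions g).ncard = 2 + (negs g).ncard := by
  rcases hg with rfl | ⟨i, hi, rfl⟩
  · rw [inversions_tgen, negs_tgen, Set.ncard_singleton, Set.ncard_eq_three]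
    exact ⟨_, _, _, by decide, by decide, by decide, rfl⟩
  · rw [inversions_sgen hi.1, negs_sgen hi.1, Set.ncard_pair (by simp; omega), Set.ncard_empty]

lemma eq_one_of_map_lt_map_add_one (hw : w ∈ hyperoctahedral n) (hpos : 1 ≤ n → 0 < w 1)
    (h : ∀ i : ℕ, 1 ≤ i → i < n → w i < w (i + 1)) : w = 1 := by
  have hmono : MonotoneOn (fun p => w p - p) (Set.Icc 1 n) := by
    refine monotoneOn_of_le_add_one Set.ordConnected_Icc fun p _ hp hp' => ?_
    lift p to ℕ using by grind
    have := h p (by grind) (by grind)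
    grind
  refine ext_of_pos hw (one_mem _) fun p hp hpn => ?_
  have h₁ := hmono (a := 1) (b := p) (by grind) (by grind) (by grind)
  have h₂ := hmono (a := p) (b := n) (by grind) (by grind) (by grind)
  have h₃ := abs_le.1 (abs_map_le hw (abs_of_nonneg n.cast_nonneg).le)
  have h₄ := hpos (by omega)
  simp only [Equiv.Perm.one_apply] at *
  omega

theorem hyperoctahedral_induction {motive : ∀ x ∈ hyperoctahedral n, Prop}
    (one : motive 1 (one_mem _))
    (mul : ∀ (g x : P) (_ : g ∈ Sset n) (hg : g ∈ hyperoctahedral n) (hx : x ∈ hyperoctahedral n),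
      NoCancel g x → motive x hx → motive (g * x) (mul_mem hg hx))
    (hw : w ∈ hyperoctahedral n) : motive w hw := by
  induction hc : (inversions w).ncard using Nat.strong_induction_on generalizing w with
  | _ c ih =>
  by_cases h : ∃ g ∈ Sset n, g ∈ hyperoctahedral n ∧ NoCancel g (g * w)
  · obtain ⟨g, hgS, hg, h⟩ := h
    have hx := mul_mem hg hw
    have hcard := h.ncard_inversions_mul hg hx
    rw [mul_mul_of_mem_Sset hgS, ncard_inversions_of_mem_Sset hgS] at hcard
    simpa only [mul_mul_of_mem_Sset hgS] using mul g _ hgS hg hx h (ih _ (by omega) hx rfl)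
  · push Not at h
    have hcancel : ∀ g ∈ Sset n, g ∈ hyperoctahedral n → NoCancel g w := fun g hgS hg =>
      (noCancel_or hgS hw).resolve_right (h g hgS hg)
    obtain rfl : w = 1 := by
      refine inv_eq_one.1 (eq_one_of_map_lt_map_add_one (inv_mem hw) (fun hn => ?_) ?_)
      · exact (noCancel_tgen_iff hw).1 (hcancel _ (Or.inl rfl) (tgen_mem hn))
      · exact fun i hi hin => (noCancel_sgen_iff hi hw).1
          (hcancel _ (sgen_mem_Sset hi hin) (sgen_mem hi hin))
    exact one

lemma tcount_cons (g : P) (s : List P) :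
    tcount (g :: s) = (if g = tgen then 1 else 0) + tcount s := by
  simp [tcount]

lemma inversions_one : inversions 1 = ∅ :=
  Set.eq_empty_of_forall_notMem fun _ hp => lt_asymm hp.1 hp.2

lemma negs_one : negs 1 = ∅ := Set.eq_empty_of_forall_notMem fun _ hp => lt_asymm hp.1 hp.2

lemma exists_word (hw : w ∈ hyperoctahedral n) :
    ∃ s : List P, (∀ g ∈ s, g ∈ Sset n) ∧ s.prod = w ∧ tcount s = (negs w).ncard ∧
      2 * s.length + (negs w).ncard = (inversions w).ncard := by
  induction hw using hyperoctahedral_induction with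
  | one => exact ⟨[], by simp, by simp, by simp [tcount, negs_one],
      by simp [negs_one, inversions_one]⟩
  | mul g x hgS hg hx h ih =>
    obtain ⟨s, hs, rfl, ht, hlen⟩ := ih
    refine ⟨g :: s, List.forall_mem_cons.2 ⟨hgS, hs⟩, List.prod_cons, ?_, ?_⟩
    · rw [tcount_cons, h.ncard_negs_mul hg hx, ncard_negs_of_mem_Sset hgS, ht]
    · rw [h.ncard_negs_mul hg hx, h.ncard_inversions_mul hg hx,
        ncard_inversions_of_mem_Sset hgS, List.length_cons]
      omega

-- Left multiplication by `g` changes `(negs ·).ncard` by `(negs g).ncard` and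
-- `(inversions ·).ncard` by `2 + (negs g).ncard`, both in the same direction.
lemma ncard_prod_le {s : List P} (hs : ∀ g ∈ s, g ∈ Sset n) :
    (negs s.prod).ncard ≤ tcount s ∧
      tcount s + (inversions s.prod).ncard ≤ 2 * s.length + 2 * (negs s.prod).ncard := by
  induction s with
  | nil => simp [tcount, negs_one, inversions_one]
  | cons g s ih =>
    obtain ⟨hg, hs⟩ := List.forall_mem_cons.1 hs
    obtain ⟨ih_negs, ih_inversions⟩ := ih hs
    have hgW := Sset_subset n hg
    have hx := list_prod_mem fun g hg => Sset_subset n (hs g hg)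
    have hg_negs := ncard_negs_of_mem_Sset hg
    have hg_inversions := ncard_inversions_of_mem_Sset hg
    rw [List.prod_cons, tcount_cons, List.length_cons, ← hg_negs]
    rcases noCancel_or hg hx with h | h
    · have := h.ncard_negs_mul hgW hx
      have := h.ncard_inversions_mul hgW hx
      omega
    · have h_negs := h.ncard_negs_mul hgW (mul_mem hgW hx)
      have h_inversions := h.ncard_inversions_mul hgW (mul_mem hgW hx)
      rw [mul_mul_of_mem_Sset hg] at h_negs h_inversions
      have : (negs g).ncard ≤ 1 := by split_ifs at hg_negs <;> omega
      omega

theorem two_mul_len_add (hw : w ∈ hyperoctahedral n) :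
    2 * len n w + (negs w).ncard = (inversions w).ncard := by
  obtain ⟨s, hs, hprod, -, hlen⟩ := exists_word hw
  have hne : {k | ∃ l : List P, (∀ g ∈ l, g ∈ Sset n) ∧ l.prod = w ∧ l.length = k}.Nonempty :=
    ⟨_, s, hs, hprod, rfl⟩
  have hle : len n w ≤ s.length := Nat.sInf_le ⟨s, hs, hprod, rfl⟩
  obtain ⟨r, hr, rfl, hr_length⟩ := Nat.sInf_mem hne
  change r.length = len n r.prod at hr_length
  have := ncard_prod_le hr
  omega

theorem tlen_eq_ncard_negs (hw : w ∈ hyperoctahedral n) : tlen n w = (negs w).ncard := by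
  have hlen := two_mul_len_add hw
  obtain ⟨s, hs, hprod, htcount, hs_length⟩ := exists_word hw
  have hmem : (negs w).ncard ∈ {k | ∃ l : List P, (∀ g ∈ l, g ∈ Sset n) ∧ l.prod = w ∧
      l.length = len n w ∧ tcount l = k} := ⟨s, hs, hprod, by omega, htcount⟩
  refine le_antisymm (Nat.sInf_le hmem) (le_csInf ⟨_, hmem⟩ ?_)
  rintro _ ⟨r, hr, rfl, -, rfl⟩
  exact (ncard_prod_le hr).1

lemma NoCancel.len_mul (h : NoCancel x y) (hx : x ∈ hyperoctahedral n)
    (hy : y ∈ hyperoctahedral n) : len n (x * y) = len n x + len n y := by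
  have := two_mul_len_add hx
  have := two_mul_len_add hy
  have := two_mul_len_add (mul_mem hx hy)
  have := h.ncard_negs_mul hx hy
  have := h.ncard_inversions_mul hx hy
  omega

lemma ncard_inversions_inv (w : P) : (inversions w⁻¹).ncard = (inversions w).ncard := by
  have hinj : (fun p : ℤ × ℤ => (w p.2, w p.1)).Injective := fun p q h => by
    simp only [Prod.mk.injEq, w.injective.eq_iff] at h
    exact Prod.ext h.2 h.1
  rw [← Set.ncard_image_of_injective (inversions w) hinj]
  congr 1
  ext ⟨p, q⟩
  constructor
  · exact fun h => ⟨(w⁻¹ q, w⁻¹ p), ⟨h.2, by simpa using h.1⟩, by simp⟩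
  · rintro ⟨r, hr, h⟩
    rw [← h]
    exact ⟨hr.2, by simpa using hr.1⟩

lemma ncard_negs_inv (hw : w ∈ hyperoctahedral n) : (negs w⁻¹).ncard = (negs w).ncard := by
  have hinj : (fun p : ℤ => -w p).Injective := neg_injective.comp w.injective
  rw [← Set.ncard_image_of_injective (negs w) hinj]
  congr 1
  ext p
  constructor
  · exact fun h => ⟨-w⁻¹ p, ⟨neg_pos.2 h.2, by simpa [map_neg hw] using h.1⟩, by simp [map_neg hw]⟩
  · rintro ⟨r, hr, rfl⟩
    exact ⟨neg_pos.2 hr.2, by simpa [map_neg (inv_mem hw)] using hr.1⟩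

lemma len_inv (hw : w ∈ hyperoctahedral n) : len n w⁻¹ = len n w := by
  have := two_mul_len_add hw
  have := two_mul_len_add (inv_mem hw)
  have := ncard_negs_inv hw
  have := ncard_inversions_inv w
  omega

lemma len_of_mem_Sset (hg : g ∈ Sset n) (hgW : g ∈ hyperoctahedral n) : len n g = 1 := by
  have := two_mul_len_add hgW
  have := ncard_inversions_of_mem_Sset hg
  omega

lemma len_sgen_mul (hi : 1 ≤ i) (hin : i < n) (hx : x ∈ hyperoctahedral n)
    (h : x⁻¹ i < x⁻¹ (i + 1)) : len n (sgen i * x) = len n x + 1 := by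
  rw [((noCancel_sgen_iff hi hx).2 h).len_mul (sgen_mem hi hin) hx,
    len_of_mem_Sset (sgen_mem_Sset hi hin) (sgen_mem hi hin), add_comm]

lemma len_sgen_mul_add_one (hi : 1 ≤ i) (hin : i < n) (hx : x ∈ hyperoctahedral n)
    (h : x⁻¹ (i + 1) < x⁻¹ i) : len n (sgen i * x) + 1 = len n x := by
  conv_rhs => rw [← sgen_mul_sgen_mul hi (x := x)]
  refine (len_sgen_mul hi hin (mul_mem (sgen_mem hi hin) hx) ?_).symm
  rwa [sgen_mul_inv_apply_self hi, sgen_mul_inv_apply_succ hi]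

lemma len_sgen_mul_lt_iff (hi : 1 ≤ i) (hin : i < n) (hx : x ∈ hyperoctahedral n) :
    len n (sgen i * x) < len n x ↔ x⁻¹ (i + 1) < x⁻¹ i := by
  rcases lt_or_gt_of_ne (show x⁻¹ i ≠ x⁻¹ (i + 1) by simp) with h | h
  · have := len_sgen_mul hi hin hx h
    omega
  · have := len_sgen_mul_add_one hi hin hx h
    omega

lemma len_le_len_sgen_mul_add_one (hi : 1 ≤ i) (hin : i < n) (hx : x ∈ hyperoctahedral n) :
    len n x ≤ len n (sgen i * x) + 1 := by
  rcases lt_or_gt_of_ne (show x⁻¹ i ≠ x⁻¹ (i + 1) by simp) with h | h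
  · have := len_sgen_mul hi hin hx h
    omega
  · exact (len_sgen_mul_add_one hi hin hx h).ge

lemma len_lt_len_ttgen_mul (hj : 1 ≤ j) (hjn : j ≤ n) (hx : x ∈ hyperoctahedral n)
    (h : 0 < x⁻¹ j) : len n x < len n (ttgen j * x) := by
  induction j, hj using Nat.le_induction generalizing x with
  | base =>
    rw [ttgen_one, ((noCancel_tgen_iff hx).2 (by simpa using h)).len_mul (tgen_mem hjn) hx,
      len_of_mem_Sset (Or.inl rfl) (tgen_mem hjn)]
    omega
  | succ j hj ih =>
    obtain ⟨y, hy⟩ : ∃ y, y = sgen j * x := ⟨_, rfl⟩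
    rw [ttgen_succ hj, mul_assoc, mul_assoc, ← hy]
    have hyW : y ∈ hyperoctahedral n := hy ▸ mul_mem (sgen_mem hj hjn) hx
    have hyj : y⁻¹ j = x⁻¹ (j + 1) := hy ▸ sgen_mul_inv_apply_self hj
    have hyj' : y⁻¹ (j + 1) = x⁻¹ j := hy ▸ sgen_mul_inv_apply_succ hj
    push_cast at h
    have hty : len n y < len n (ttgen j * y) := ih (by omega) hyW (by omega)
    have htyW : ttgen j * y ∈ hyperoctahedral n := mul_mem (ttgen_mem (by omega)) hyW
    have htyj := ttgen_mul_inv_apply_self (j := j) hyW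
    have htyj' := ttgen_mul_inv_apply_succ hj (x := y)
    rcases lt_or_gt_of_ne (show x⁻¹ j ≠ x⁻¹ (j + 1) by simp) with hlt | hlt
    · have hlen := len_sgen_mul hj hjn hx hlt
      have := len_le_len_sgen_mul_add_one hj hjn htyW
      rw [← hy] at hlen
      omega
    · have hlen := len_sgen_mul_add_one hj hjn hx hlt
      have := len_sgen_mul hj hjn htyW (by omega)
      rw [← hy] at hlen
      omega

lemma len_ttgen_mul_lt_iff (hj : 1 ≤ j) (hjn : j ≤ n) (hx : x ∈ hyperoctahedral n) :
    len n (ttgen j * x) < len n x ↔ x⁻¹ j < 0 := by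
  have h0 := map_eq_zero_iff (p := j) (inv_mem hx)
  rcases lt_or_ge 0 (x⁻¹ j) with h | h
  · have := len_lt_len_ttgen_mul hj hjn hx h
    omega
  · have := len_lt_len_ttgen_mul hj hjn (mul_mem (ttgen_mem hjn) hx)
      (by rw [ttgen_mul_inv_apply_self hx]; omega)
    rw [ttgen_mul_ttgen_mul] at this
    omega

/-! ### Descent sets and exchangeable positions -/

lemma Ldesc_subset_iff (hn : 1 ≤ n) (hx : x ∈ hyperoctahedral n) (hy : y ∈ hyperoctahedral n) :
    Ldesc n x ⊆ Ldesc n y ↔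
      (∀ i : ℕ, 1 ≤ i → i < n → x⁻¹ (i + 1) < x⁻¹ i → y⁻¹ (i + 1) < y⁻¹ i) ∧
      ∀ j : ℕ, 1 ≤ j → j ≤ n → x⁻¹ j < 0 → y⁻¹ j < 0 := by
  constructor
  · refine fun h => ⟨fun i hi hin hxi => ?_, fun j hj hjn hxj => ?_⟩
    · exact (len_sgen_mul_lt_iff hi hin hy).1
        (h ⟨Or.inl (sgen_mem_Sset hi hin), (len_sgen_mul_lt_iff hi hin hx).2 hxi⟩).2
    · exact (len_ttgen_mul_lt_iff hj hjn hy).1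
        (h ⟨Or.inr ⟨j, ⟨hj, hjn⟩, rfl⟩, (len_ttgen_mul_lt_iff hj hjn hx).2 hxj⟩).2
  · have httgen : (∀ j : ℕ, 1 ≤ j → j ≤ n → x⁻¹ j < 0 → y⁻¹ j < 0) → ∀ j : ℕ, 1 ≤ j → j ≤ n →
        len n (ttgen j * x) < len n x → len n (ttgen j * y) < len n y := fun h j hj hjn hxj =>
      (len_ttgen_mul_lt_iff hj hjn hy).2 (h j hj hjn ((len_ttgen_mul_lt_iff hj hjn hx).1 hxj))
    rintro ⟨hs, ht⟩ u ⟨(rfl | ⟨i, hi, rfl⟩) | ⟨j, hj, rfl⟩, hu⟩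
    · refine ⟨Or.inl (Or.inl rfl), ?_⟩
      rw [← ttgen_one] at hu ⊢
      exact httgen ht 1 le_rfl hn hu
    · have hi' := mem_Icc_iff_lt.1 hi
      exact ⟨Or.inl (Or.inr ⟨i, hi, rfl⟩), (len_sgen_mul_lt_iff hi'.1 hi'.2 hy).2
        (hs i hi'.1 hi'.2 ((len_sgen_mul_lt_iff hi'.1 hi'.2 hx).1 hu))⟩
    · exact ⟨Or.inr ⟨j, hj, rfl⟩, httgen ht j hj.1 hj.2 hu⟩

/-- The letters in positions `i` and `i + 1` of the word `c 1, …, c n` are in increasing order and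
may be exchanged: they have opposite signs, or a neighbouring letter lies between them. -/
def IsExchangeable (n : ℕ) (c : ℤ → ℤ) (i : ℕ) : Prop :=
  c i < c (i + 1) ∧ ((c i < 0 ∧ 0 < c (i + 1)) ∨
    (1 < i ∧ c i < c (i - 1) ∧ c (i - 1) < c (i + 1)) ∨
    (i + 1 < n ∧ c i < c (i + 2) ∧ c (i + 2) < c (i + 1)))

lemma IsExchangeable.not_Ldesc_subset (h : IsExchangeable n ⇑x⁻¹ i) (hi : 1 ≤ i) (hin : i < n)
    (hx : x ∈ hyperoctahedral n) : ¬ Ldesc n x ⊆ Ldesc n (sgen i * x) := by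
  rw [Ldesc_subset_iff (by omega) hx (mul_mem (sgen_mem hi hin) hx)]
  simp only [mul_inv_rev, sgen_inv hi, Equiv.Perm.mul_apply]
  have hself := sgen_apply_self hi
  have hsucc := sgen_apply_succ hi
  rintro ⟨hs, ht⟩
  obtain ⟨-, hsign | ⟨hi', hlo, hhi⟩ | ⟨hin', hlo, hhi⟩⟩ := h
  · have := ht i hi hin.le hsign.1
    rw [hself] at this
    omega
  · have := hs (i - 1) (by omega) (by omega)
    have hpred : sgen i ((i : ℤ) - 1) = i - 1 :=
      sgen_apply_of_ne hi (by omega) (by omega) (by omega)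
    push_cast [hi] at this
    simp only [sub_add_cancel, hself, hpred] at this
    omega
  · have := hs (i + 1) (by omega) hin'
    have hsucc₂ : sgen i ((i : ℤ) + 2) = i + 2 :=
      sgen_apply_of_ne hi (by omega) (by omega) (by omega)
    push_cast at this
    simp only [add_assoc, Int.reduceAdd, hsucc, hsucc₂] at this
    omega

lemma Ldesc_subset_sgen_mul (hi : 1 ≤ i) (hin : i < n) (hx : x ∈ hyperoctahedral n)
    (h : x⁻¹ i < x⁻¹ (i + 1)) (hexch : ¬ IsExchangeable n ⇑x⁻¹ i) :
    Ldesc n x ⊆ Ldesc n (sgen i * x) := by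
  rw [Ldesc_subset_iff (by omega) hx (mul_mem (sgen_mem hi hin) hx)]
  simp only [mul_inv_rev, sgen_inv hi, Equiv.Perm.mul_apply]
  simp only [IsExchangeable, h, true_and, not_or] at hexch
  obtain ⟨hsign, hleft, hright⟩ := hexch
  have hinj : ∀ p q, x⁻¹ p = x⁻¹ q → p = q := fun p q h => x⁻¹.injective h
  have hself := sgen_apply_self hi
  have hsucc := sgen_apply_succ hi
  have hpred : sgen i ((i : ℤ) - 1) = i - 1 :=
    sgen_apply_of_ne hi (by omega) (by omega) (by omega)
  have hsucc₂ : sgen i ((i : ℤ) + 2) = i + 2 :=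
    sgen_apply_of_ne hi (by omega) (by omega) (by omega)
  refine ⟨fun k hk hkn hdesc => ?_, fun j hj hjn hneg => ?_⟩
  · rcases (show k = i ∨ k + 1 = i ∨ k = i + 1 ∨ (k ≠ i ∧ k + 1 ≠ i ∧ k ≠ i + 1) by omega)
      with rfl | rfl | rfl | ⟨h₁, h₂, h₃⟩
    · omega
    · push_cast at *
      have := hinj (k + 1 + 1) k
      grind
    · push_cast at *
      have := hinj (i + 2) i
      grind
    · rw [sgen_apply_of_ne hi, sgen_apply_of_ne hi] <;> omega
  · rcases (show j = i ∨ j = i + 1 ∨ (j ≠ i ∧ j ≠ i + 1) by omega) with rfl | rfl | ⟨h₁, h₂⟩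
    · have := map_eq_zero_iff (p := j + 1) (inv_mem hx)
      grind
    · push_cast at *
      grind
    · rwa [sgen_apply_of_ne hi] <;> omega

lemma knuthStep_iff (hx : x ∈ hyperoctahedral n) :
    knuthStep n x y ↔ ∃ i, 1 ≤ i ∧ i < n ∧ y = sgen i * x ∧ IsExchangeable n ⇑x⁻¹ i := by
  constructor
  · rintro ⟨i, hi, rfl, hlen, hdesc⟩
    rw [mem_Icc_iff_lt] at hi
    have h : x⁻¹ i < x⁻¹ (i + 1) := by
      have := len_sgen_mul_lt_iff hi.1 hi.2 hx
      exact (not_lt.1 (this.not.1 hlen.not_gt)).lt_of_ne (by simp)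
    exact ⟨i, hi.1, hi.2, rfl, by_contra fun hexch =>
      hdesc (Ldesc_subset_sgen_mul hi.1 hi.2 hx h hexch)⟩
  · rintro ⟨i, hi, hin, rfl, h⟩
    refine ⟨i, mem_Icc_iff_lt.2 ⟨hi, hin⟩, rfl, ?_, h.not_Ldesc_subset hi hin hx⟩
    rw [len_sgen_mul hi hin hx h.1]
    exact Nat.lt_succ_self _

/-! ### One-line words -/

section Word

variable {k m : ℕ} {c d : ℤ → ℤ} {u v : List ℤ}

/-- The word `c 1, …, c n`. -/
def word (n : ℕ) (c : ℤ → ℤ) : List ℤ := (List.range n).map fun k : ℕ => c (k + 1)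

lemma length_word : (word n c).length = n := by simp [word]

lemma mem_word : q ∈ word n c ↔ ∃ p : ℤ, 0 < p ∧ p ≤ n ∧ c p = q := by
  simp only [word, List.mem_map, List.mem_range]
  constructor
  · rintro ⟨k, hk, rfl⟩
    exact ⟨k + 1, by omega, by omega, rfl⟩
  · rintro ⟨p, hp, hpn, rfl⟩
    exact ⟨(p - 1).toNat, by omega, congrArg c (by omega)⟩

lemma map_word (f : ℤ → ℤ) : (word n c).map f = word n (f ∘ c) := by simp [word]

lemma word_eq_word_iff : word n c = word n d ↔ ∀ p : ℤ, 0 < p → p ≤ n → c p = d p := by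
  simp only [word, List.map_inj_left, List.mem_range]
  refine ⟨fun h p hp hpn => ?_, fun h k hk => h (k + 1) (by omega) (by omega)⟩
  have := h (p - 1).toNat (by omega)
  rwa [show ((p - 1).toNat : ℤ) + 1 = p by omega] at this

lemma word_add (k m : ℕ) (c : ℤ → ℤ) :
    word (k + m) c = word k c ++ word m (fun p => c (k + p)) := by
  simp [word, List.range_add, add_assoc, Function.comp_def]

lemma word_succ (m : ℕ) (c : ℤ → ℤ) : word (m + 1) c = c 1 :: word m (fun p => c (1 + p)) := by
  rw [add_comm, word_add]
  simp [word]

lemma word_add_two_add (k m : ℕ) (c : ℤ → ℤ) : word (k + 2 + m) c =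
    word k c ++ c (k + 1) :: c (k + 2) :: word m (fun p => c (k + 2 + p)) := by
  rw [add_assoc, add_comm 2, word_add, word_succ, word_succ]
  simp [← add_assoc, add_right_comm]

lemma word_comp_sgen (k m : ℕ) (c : ℤ → ℤ) : word (k + 2 + m) (c ∘ sgen (k + 1)) =
    word k c ++ c (k + 2) :: c (k + 1) :: word m (fun p => c (k + 2 + p)) := by
  have hself := sgen_apply_self (i := k + 1) (by omega)
  have hsucc := sgen_apply_succ (i := k + 1) (by omega)
  push_cast at hself hsucc
  rw [add_assoc, one_add_one_eq_two] at hself hsucc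
  have hfix (p : ℤ) (hp : 0 ≤ p) (h : p ≤ k ∨ k + 2 < p) : sgen (k + 1) p = p :=
    sgen_apply_of_ne (by omega) hp (by omega) (by omega)
  rw [word_add_two_add]
  simp only [Function.comp_apply, hself, hsucc]
  congr 1
  · exact word_eq_word_iff.2 fun p hp hpk => by simp [hfix p (by omega) (by omega)]
  · congr 2
    exact word_eq_word_iff.2 fun p hp _ => by rw [hfix _ (by omega) (by omega)]

lemma eq_word_of_append_cons_cons {a b : ℤ} (h : word n c = u ++ a :: b :: v) :
    n = u.length + 2 + v.length ∧ u = word u.length c ∧ c (u.length + 1) = a ∧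
      c (u.length + 2) = b ∧ v = word v.length (fun p => c (u.length + 2 + p)) := by
  have hn := congrArg List.length h
  simp only [length_word, List.length_append, List.length_cons] at hn
  obtain rfl : n = u.length + 2 + v.length := by omega
  rw [word_add_two_add] at h
  obtain ⟨hu, h⟩ := List.append_inj h length_word
  simp only [List.cons.injEq] at h
  exact ⟨rfl, hu.symm, h.1, h.2.1, h.2.2.symm⟩

lemma word_comp_sgen_eq_of_word_eq {a b : ℤ} (h : word n c = u ++ a :: b :: v) :
    word n (c ∘ sgen (u.length + 1)) = u ++ b :: a :: v := by
  obtain ⟨rfl, hu, rfl, rfl, hv⟩ := eq_word_of_append_cons_cons h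
  rw [word_comp_sgen, ← hu, ← hv]

lemma signedMove_word_comp_sgen (hi : 1 ≤ i) (hin : i < n) (h : IsExchangeable n c i) :
    SignedMove (word n c) (word n (c ∘ sgen i)) := by
  obtain ⟨k, rfl⟩ := Nat.exists_eq_add_of_le' hi
  obtain ⟨m, rfl⟩ : ∃ m, n = k + 2 + m := ⟨n - (k + 2), by omega⟩
  rw [word_comp_sgen, word_add_two_add]
  simp only [IsExchangeable] at h
  push_cast at h
  simp only [add_sub_cancel_right, add_assoc, Int.reduceAdd] at h
  rcases h with ⟨-, hsign | ⟨hk, hlo, hhi⟩ | ⟨hm, hlo, hhi⟩⟩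
  · exact .inr (.mk _ _ hsign.1 hsign.2)
  · obtain ⟨k, rfl⟩ := Nat.exists_eq_add_one.2 (show 0 < k by omega)
    have hlast : word (k + 1) c = word k c ++ [c (k + 1)] := word_add k 1 c
    rw [hlast, List.append_assoc, List.append_assoc]
    push_cast at *
    exact .inl (.bac _ _ hlo hhi)
  · obtain ⟨m, rfl⟩ := Nat.exists_eq_add_one.2 (show 0 < m by omega)
    rw [word_succ, add_assoc (k : ℤ)]
    exact .inl (.acb _ _ hlo hhi)

lemma isExchangeable_of_signedMove (h : SignedMove (word n c) v) :
    ∃ i, 1 ≤ i ∧ i < n ∧ v = word n (c ∘ sgen i) ∧ IsExchangeable n c i := by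
  generalize hu : word n c = u at h
  simp only [IsExchangeable]
  rcases h with (⟨u, v, hab, hbc⟩ | ⟨u, v, hab, hbc⟩) | ⟨u, v, ha, hb⟩
  · rename_i a b c'
    have hu' : word n c = (u ++ [b]) ++ a :: c' :: v := by simpa using hu
    obtain ⟨-, -, h₀, -, -⟩ := eq_word_of_append_cons_cons hu
    obtain ⟨hn, -, h₁, h₂, -⟩ := eq_word_of_append_cons_cons hu'
    have hswap := word_comp_sgen_eq_of_word_eq hu'
    simp only [List.length_append, List.length_singleton] at hn h₁ h₂ hswap
    refine ⟨u.length + 1 + 1, by omega, by omega, by simp [hswap], ?_⟩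
    push_cast at *
    simp only [add_assoc, Int.reduceAdd] at *
    grind
  · rename_i a b c'
    have hu' : word n c = (u ++ [a]) ++ c' :: b :: v := by simpa using hu
    obtain ⟨-, -, h₀, -, -⟩ := eq_word_of_append_cons_cons hu
    obtain ⟨hn, -, h₁, h₂, -⟩ := eq_word_of_append_cons_cons hu'
    simp only [List.length_append, List.length_singleton] at hn h₁ h₂
    refine ⟨u.length + 1, by omega, by omega, (word_comp_sgen_eq_of_word_eq hu).symm, ?_⟩
    push_cast at *
    simp only [add_assoc, Int.reduceAdd] at *
    grind
  · obtain ⟨hn, -, h₁, h₂, -⟩ := eq_word_of_append_cons_cons hu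
    refine ⟨u.length + 1, by omega, by omega, (word_comp_sgen_eq_of_word_eq hu).symm, ?_⟩
    push_cast
    simp only [add_assoc, Int.reduceAdd]
    grind

lemma SignedMove.exists_swap (h : SignedMove u v) :
    ∃ p a b q, u = p ++ a :: b :: q ∧ v = p ++ b :: a :: q := by
  rcases h with (⟨u, v, -, -⟩ | ⟨u, v, -, -⟩) | ⟨u, v, -, -⟩
  · exact ⟨u ++ [_], _, _, v, List.append_cons .., List.append_cons ..⟩
  · exact ⟨u, _, _, _, rfl, rfl⟩
  · exact ⟨u, _, _, v, rfl, rfl⟩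

lemma pairwise_word {R : ℤ → ℤ → Prop}
    (h : ∀ p q : ℤ, 0 < p → p < q → q ≤ n → R (c p) (c q)) : (word n c).Pairwise R := by
  refine List.pairwise_map.2 (List.pairwise_lt_range.imp_of_mem fun {k m} _ hm hkm => ?_)
  rw [List.mem_range] at hm
  exact h _ _ (by omega) (by omega) (by omega)

lemma reverse_word (n : ℕ) (c : ℤ → ℤ) : (word n c).reverse = word n (fun p => c (n + 1 - p)) := by
  refine List.ext_getElem (by simp [length_word]) fun k hk _ => ?_
  simp only [List.length_reverse, length_word] at hk
  simp only [word, List.getElem_reverse, List.getElem_map, List.getElem_range, List.length_map,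
    List.length_range]
  exact congrArg c (by omega)

end Word

lemma word_inv_injOn : Set.InjOn (fun x : P => word n ⇑x⁻¹) (Wset n) := fun _ hx _ hy h =>
  inv_injective (ext_of_pos (inv_mem hx) (inv_mem hy) (word_eq_word_iff.1 h))

lemma word_sgen_mul_inv (hi : 1 ≤ i) : word n ⇑(sgen i * x)⁻¹ = word n (⇑x⁻¹ ∘ sgen i) := by
  rw [mul_inv_rev, sgen_inv hi, Equiv.Perm.coe_mul]

lemma mem_of_knuthStep (h : knuthStep n x y) : x ∈ Wset n ↔ y ∈ Wset n := by
  obtain ⟨i, hi, rfl, -⟩ := h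
  rw [mem_Icc_iff_lt] at hi
  exact ((hyperoctahedral n).mul_mem_cancel_left (sgen_mem hi.1 hi.2)).symm

lemma signedMove_of_knuthStep (hx : x ∈ Wset n) (h : knuthStep n x y) :
    SignedMove (word n ⇑x⁻¹) (word n ⇑y⁻¹) := by
  obtain ⟨i, hi, hin, rfl, hexch⟩ := (knuthStep_iff hx).1 h
  rw [word_sgen_mul_inv hi]
  exact signedMove_word_comp_sgen hi hin hexch

lemma exists_knuthStep_right {v : List ℤ} (hx : x ∈ Wset n) (h : SignedMove (word n ⇑x⁻¹) v) :
    ∃ y ∈ Wset n, v = word n ⇑y⁻¹ ∧ knuthStep n x y := by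
  obtain ⟨i, hi, hin, rfl, hexch⟩ := isExchangeable_of_signedMove h
  exact ⟨sgen i * x, mul_mem (sgen_mem hi hin) hx, (word_sgen_mul_inv hi).symm,
    (knuthStep_iff hx).2 ⟨i, hi, hin, rfl, hexch⟩⟩

lemma exists_knuthStep_left {u : List ℤ} (hy : y ∈ Wset n) (h : SignedMove u (word n ⇑y⁻¹)) :
    ∃ x ∈ Wset n, u = word n ⇑x⁻¹ ∧ knuthStep n x y := by
  obtain ⟨p, a, b, q, hu, hv⟩ := h.exists_swap
  have hx : sgen (p.length + 1) * y ∈ Wset n :=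
    mul_mem (sgen_mem (by omega) (by have := (eq_word_of_append_cons_cons hv).1; omega)) hy
  have huword : u = word n ⇑(sgen (p.length + 1) * y)⁻¹ := by
    rw [word_sgen_mul_inv (by omega), word_comp_sgen_eq_of_word_eq hv, hu]
  rw [huword] at h
  obtain ⟨z, hz, hyz, hstep⟩ := exists_knuthStep_right hx h
  exact ⟨_, hx, huword, word_inv_injOn hy hz hyz ▸ hstep⟩

theorem mem_and_signedEquiv_of_knuthRel (hx : x ∈ Wset n) (h : knuthRel n x y) :
    y ∈ Wset n ∧ SignedEquiv (word n ⇑x⁻¹) (word n ⇑y⁻¹) := by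
  induction h with
  | refl => exact ⟨hx, .refl _⟩
  | tail _ h ih =>
    rcases h with h | h
    · exact ⟨(mem_of_knuthStep h).1 ih.1,
        ih.2.trans _ _ _ (.rel _ _ (signedMove_of_knuthStep ih.1 h))⟩
    · have hmem := (mem_of_knuthStep h).2 ih.1
      exact ⟨hmem, ih.2.trans _ _ _ (.symm _ _ (.rel _ _ (signedMove_of_knuthStep hmem h)))⟩

theorem knuthRel_iff_signedEquiv (hx : x ∈ Wset n) (hy : y ∈ Wset n) :
    knuthRel n x y ↔ SignedEquiv (word n ⇑x⁻¹) (word n ⇑y⁻¹) := by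
  refine ⟨fun h => (mem_and_signedEquiv_of_knuthRel hx h).2, fun h => ?_⟩
  suffices ∀ v, SignedEquiv (word n ⇑x⁻¹) v → ∃ z ∈ Wset n, v = word n ⇑z⁻¹ ∧ knuthRel n x z by
    obtain ⟨z, hz, hyz, hrel⟩ := this _ h
    exact word_inv_injOn hy hz hyz ▸ hrel
  intro v h
  rw [SignedEquiv, ← Relation.EqvGen.reflTransGen_symmGen] at h
  induction h with
  | refl => exact ⟨x, hx, rfl, .refl⟩
  | tail _ h ih =>
    obtain ⟨z, hz, rfl, hrel⟩ := ih
    rcases h with h | h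
    · obtain ⟨y, hy, rfl, hstep⟩ := exists_knuthStep_right hz h
      exact ⟨y, hy, rfl, hrel.tail (.inl hstep)⟩
    · obtain ⟨y, hy, rfl, hstep⟩ := exists_knuthStep_left hz h
      exact ⟨y, hy, rfl, hrel.tail (.inr hstep)⟩

variable {a b v σ : P}

/-! ### The canonical decomposition -/

/-- The signed permutations that preserve the positive integers and, among them, those up to `l`.
This is `𝔖_{l,n-l}`, and `𝔖_n` for `l = 0`. -/
def young (n l : ℕ) : Subgroup P where
  carrier := {σ | σ ∈ hyperoctahedral n ∧ ∀ p, 0 < p → 0 < σ p ∧ (σ p ≤ l ↔ p ≤ l)}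
  one_mem' := ⟨one_mem _, by simp⟩
  mul_mem' {σ τ} hσ hτ := ⟨mul_mem hσ.1 hτ.1, fun p hp =>
    have h := hσ.2 _ (hτ.2 p hp).1
    ⟨h.1, h.2.trans (hτ.2 p hp).2⟩⟩
  inv_mem' {σ} hσ := by
    refine ⟨inv_mem hσ.1, fun p hp => ?_⟩
    have hpos : 0 < σ⁻¹ p := by
      have h := hσ.2 (-σ⁻¹ p)
      have h0 := map_eq_zero_iff (p := p) (inv_mem hσ.1)
      rw [map_neg hσ.1, apply_inv_self] at h
      omega
    have h := (hσ.2 _ hpos).2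
    rw [apply_inv_self] at h
    exact ⟨hpos, h.symm⟩

/-- The shuffles: they preserve the positive integers and increase on `1, …, l` and beyond `l`. -/
structure IsShuffle (n l : ℕ) (a : P) : Prop where
  mem : a ∈ young n 0
  strictMonoOn_Ioc : StrictMonoOn a (Set.Ioc 0 l)
  strictMonoOn_Ioi : StrictMonoOn a (Set.Ioi l)

lemma young_le_young_zero : young n l ≤ young n 0 := fun σ h =>
  ⟨h.1, fun p hp => ⟨(h.2 p hp).1, by have := (h.2 p hp).1; simp; omega⟩⟩

lemma map_pos_iff (hσ : σ ∈ young n l) : 0 < σ p ↔ 0 < p := by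
  refine ⟨fun h => ?_, fun h => (hσ.2 p h).1⟩
  simpa using ((inv_mem hσ).2 _ h).1

lemma map_neg_iff (hσ : σ ∈ young n l) : σ p < 0 ↔ p < 0 := by
  have := map_pos_iff (p := -p) hσ
  rw [map_neg hσ.1] at this
  omega

lemma map_le_iff (hσ : σ ∈ young n l) (hp : 0 < p) : σ p ≤ l ↔ p ≤ l := (hσ.2 p hp).2

lemma sgen_mem_young (hi : 1 ≤ i) (hin : i < n) (hil : i ≠ l) : sgen i ∈ young n l := by
  refine ⟨sgen_mem hi hin, fun p hp => ?_⟩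
  rw [sgen_apply hi]
  grind

lemma SymLR_eq_young (n l : ℕ) : SymLR n l = young n l := by
  refine le_antisymm ((Subgroup.closure_le _).2 ?_) fun σ hσ => ?_
  · rintro _ ⟨i, ⟨hi, hin, hil⟩, rfl⟩
    exact sgen_mem_young hi (by omega) hil
  obtain ⟨hW, -⟩ := id hσ
  induction hW using hyperoctahedral_induction with
  | one => exact one_mem _
  | mul g x hgS _ hx h ih =>
    have hσ' := inv_mem hσ
    rcases hgS with rfl | ⟨i, hi, rfl⟩
    · have h₁ := (noCancel_tgen_iff hx).1 h
      have h₂ := map_pos_iff (p := 1) hσ'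
      have h₃ := ttgen_mul_inv_apply_self (j := 1) hx
      simp only [ttgen_one, Nat.cast_one] at h₃
      omega
    · rw [mem_Icc_iff_lt] at hi
      have hlt := (noCancel_sgen_iff hi.1 hx).1 h
      have hil : i ≠ l := by
        have h₁ := map_le_iff (p := i) hσ' (by omega)
        have h₂ := map_le_iff (p := i + 1) hσ' (by omega)
        rw [sgen_mul_inv_apply_self hi.1] at h₁
        rw [sgen_mul_inv_apply_succ hi.1] at h₂
        omega
      refine mul_mem (Subgroup.subset_closure ⟨i, ⟨hi.1, by omega, hil⟩, rfl⟩) (ih ?_)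
      simpa only [sgen_mul_sgen_mul hi.1] using mul_mem (sgen_mem_young hi.1 hi.2 hil) hσ

lemma SymN_eq_young (n : ℕ) : SymN n = young n 0 := by
  rw [← SymLR_eq_young, SymN, SymLR]
  congr 2
  ext i
  simp only [Set.mem_Icc, Set.mem_ofPred_eq]
  omega

lemma len_mul_sgen_lt (hi : 1 ≤ i) (hin : i < n) (hx : x ∈ hyperoctahedral n)
    (h : x (i + 1) < x i) : len n (x * sgen i) < len n x := by
  rw [← len_inv (mul_mem hx (sgen_mem hi hin)), ← len_inv hx, mul_inv_rev, sgen_inv hi,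
    len_sgen_mul_lt_iff hi hin (inv_mem hx), inv_inv]
  exact h

lemma isShuffle_of_mem_Yset (ha : a ∈ Yset n l) : IsShuffle n l a := by
  obtain ⟨hS, hmin⟩ := ha
  rw [SymN_eq_young] at hS
  rw [SymLR_eq_young] at hmin
  have hlt : ∀ p : ℤ, 0 < p → p ≠ l → a p < a (p + 1) := by
    intro p hp hpl
    rcases lt_or_ge p n with hpn | hpn
    · lift p to ℕ using hp.le
      refine lt_of_not_ge fun h => ?_
      have hlen := len_mul_sgen_lt (by omega) (by omega) hS.1 (h.lt_of_ne (by simp))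
      exact hlen.not_ge (hmin _ (sgen_mem_young (by omega) (by omega) (by omega)))
    · have := le_of_abs_le (abs_map_le (p := n) hS.1 (by simp))
      rcases hpn.eq_or_lt with rfl | hpn
      · rw [map_of_lt (p := n + 1) hS.1 (by omega)]
        omega
      · rw [map_of_lt hS.1 hpn, map_of_lt hS.1 (by omega)]
        omega
  refine ⟨hS, strictMonoOn_of_lt_add_one Set.ordConnected_Ioc fun p _ hp hp' => ?_,
    strictMonoOn_of_lt_add_one Set.ordConnected_Ioi fun p _ hp _ => ?_⟩
  · exact hlt p hp.1 (by have := hp'.2; omega)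
  · have : (l : ℤ) < p := hp
    exact hlt p (by omega) (by omega)

lemma negs_mul_of_mem_young (hv : v ∈ young n l) : negs (w * v) = v ⁻¹' negs w := by
  ext p
  simp [negs, map_pos_iff hv]

lemma ncard_negs_mul_of_mem_young (hv : v ∈ young n l) :
    (negs (w * v)).ncard = (negs w).ncard := by
  rw [negs_mul_of_mem_young hv, Set.ncard_preimage_of_injective_subset_range v.injective
    (by simp [v.surjective.range_eq])]

lemma map_neg_iff_le_ncard_negs (hw : w ∈ hyperoctahedral n)
    (hmono : StrictMonoOn w (Set.Icc 1 n)) (hp : 0 < p) : w p < 0 ↔ p ≤ (negs w).ncard := by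
  have hcard : ∀ m : ℤ, (Set.Icc 1 m).ncard = m.toNat := fun m => by
    simp [Set.ncard_eq_toFinset_card']
  rcases lt_or_ge (n : ℤ) p with hpn | hpn
  · have := ncard_negs_le hw
    rw [map_of_lt hw hpn]
    omega
  constructor
  · intro h
    have hsub : Set.Icc 1 p ⊆ negs w := fun q hq =>
      ⟨hq.1, (hmono.monotoneOn ⟨hq.1, hq.2.trans hpn⟩ ⟨hp, hpn⟩ hq.2).trans_lt h⟩
    have := Set.ncard_le_ncard hsub (negs_finite hw)
    rw [hcard] at this
    omega
  · intro h
    by_contra! h'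
    have hsub : negs w ⊆ Set.Icc 1 (p - 1) := fun q hq => by
      refine ⟨hq.1, ?_⟩
      by_contra! hpq
      have := hmono.monotoneOn ⟨hp, hpn⟩ (negs_subset hw hq) (by omega)
      have := hq.2
      omega
    have := Set.ncard_le_ncard hsub (Set.finite_Icc _ _)
    rw [hcard] at this
    omega

lemma exists_strictMonoOn_mul (hw : w ∈ hyperoctahedral n) :
    ∃ v ∈ young n 0, StrictMonoOn (w * v) (Set.Icc 1 n) := by
  obtain ⟨v, hv, hmin⟩ := exists_minimalFor_of_wellFoundedLT (· ∈ young n 0)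
    (fun v => len n (w * v)) ⟨1, one_mem _⟩
  refine ⟨v, hv, strictMonoOn_of_lt_add_one Set.ordConnected_Icc fun p _ hp hp' => ?_⟩
  lift p to ℕ using by grind
  have hi : 1 ≤ p := by grind
  have hin : p < n := by grind
  refine lt_of_not_ge fun h => ?_
  have hlen := len_mul_sgen_lt hi hin (mul_mem hw hv.1) (h.lt_of_ne (by simp))
  rw [mul_assoc] at hlen
  exact hlen.not_ge (hmin (mul_mem hv (sgen_mem_young hi hin (by omega))) hlen.le)

theorem exists_mem_Yset (hw : w ∈ hyperoctahedral n) :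
    ∃ b ∈ Yset n (negs w).ncard, ∀ p, 0 < p → (w (b p) < 0 ↔ p ≤ (negs w).ncard) := by
  obtain ⟨v, hv, hmono⟩ := exists_strictMonoOn_mul hw
  have hprop : ∀ p, 0 < p → (w (v p) < 0 ↔ p ≤ (negs w).ncard) := fun p hp => by
    simpa [ncard_negs_mul_of_mem_young hv] using
      map_neg_iff_le_ncard_negs (mul_mem hw hv.1) hmono hp
  obtain ⟨b, ⟨hb, hbw⟩, hmin⟩ := exists_minimalFor_of_wellFoundedLT
    (fun b => b ∈ young n 0 ∧ ∀ p, 0 < p → (w (b p) < 0 ↔ p ≤ (negs w).ncard)) (len n)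
    ⟨v, hv, hprop⟩
  refine ⟨b, ⟨by rwa [SymN_eq_young], fun u hu => ?_⟩, hbw⟩
  rw [SymLR_eq_young] at hu
  refine (le_total _ _).elim id (hmin ⟨mul_mem hb (young_le_young_zero hu), fun p hp => ?_⟩)
  rw [Equiv.Perm.mul_apply, hbw _ (hu.2 p hp).1, map_le_iff hu hp]

lemma rgen_succ_apply (k : ℕ) (p : ℤ) : rgen (k + 1) p =
    if p = 1 then -((k : ℤ) + 1) else if p = -1 then (k : ℤ) + 1 else
    if 1 < p ∧ p ≤ k + 1 then p - 1 else if p < -1 ∧ -(k + 1) ≤ p then p + 1 else p := by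
  induction k with
  | zero =>
    rw [rgen, ← ttgen_one, ttgen_apply]
    grind
  | succ k ih =>
    rw [rgen, Equiv.Perm.mul_apply, ih, sgen_apply (by omega)]
    grind

lemma al_apply (l : ℕ) (p : ℤ) : al l p =
    if 0 < p ∧ p ≤ l then p - (l + 1) else if -l ≤ p ∧ p < 0 then p + (l + 1) else p := by
  induction l generalizing p with
  | zero =>
    simp only [al, List.range_zero, List.map_nil, List.prod_nil, Equiv.Perm.one_apply]
    grind
  | succ l ih =>
    have hal : al (l + 1) = al l * rgen (l + 1) := by simp [al, List.range_succ]
    rw [hal, Equiv.Perm.mul_apply, ih, rgen_succ_apply]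
    grind

lemma al_apply_of_le (hp : 0 < p) (hpl : p ≤ l) : al l p = p - (l + 1) := by
  rw [al_apply, if_pos ⟨hp, hpl⟩]

lemma al_apply_of_lt (hp : (l : ℤ) < p) : al l p = p := by
  rw [al_apply]
  grind

lemma al_inv (l : ℕ) : (al l)⁻¹ = al l := by
  refine inv_eq_of_mul_eq_one_left (Equiv.ext fun p => ?_)
  rw [Equiv.Perm.mul_apply, al_apply, al_apply, Equiv.Perm.one_apply]
  grind

lemma al_mem (hl : l ≤ n) : al l ∈ hyperoctahedral n := by
  refine ⟨fun p => ?_, fun p hp => ?_⟩ <;> simp only [al_apply] <;> grind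

lemma noCancel_of_mem_young (hx : x ∈ hyperoctahedral n) (hy : y ∈ young n l)
    (h : ∀ p q, 0 < p → p < q → y q < y p → x (y q) < x (y p)) : NoCancel x y := by
  intro p q hpq hlt
  rcases lt_or_ge 0 p with hp | hp
  · exact h p q hp hpq hlt
  · have hp' := map_pos_iff (p := p) hy
    have hq := map_pos_iff (p := q) hy
    have hq' := map_neg_iff (p := q) hy
    have := h (-q) (-p)
    simp only [map_neg hy.1, map_neg hx] at this
    omega

lemma noCancel_al (ha : a ∈ young n 0) (l : ℕ) : NoCancel a (al l) := by
  intro p q hpq hlt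
  have hsign : al l q ≤ 0 ∧ 0 ≤ al l p := by
    simp only [al_apply] at hlt ⊢
    grind
  have hp := map_neg_iff (p := al l p) ha
  have hq := map_pos_iff (p := al l q) ha
  have : a (al l q) ≠ a (al l p) := by simpa using hpq.ne'
  omega

lemma IsShuffle.noCancel_mul_al (ha : IsShuffle n l a) (hl : l ≤ n) (hσ : σ ∈ young n l) :
    NoCancel (a * al l) σ := by
  refine noCancel_of_mem_young (mul_mem ha.mem.1 (al_mem hl)) hσ fun p q hp hpq hlt => ?_
  have hσp := (map_pos_iff (p := p) hσ).2 hp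
  have hσq := (map_pos_iff (p := q) hσ).2 (hp.trans hpq)
  have hp' := map_le_iff hσ hp
  have hq' := map_le_iff hσ (hp.trans hpq)
  simp only [Equiv.Perm.mul_apply]
  rcases le_or_gt q l with hql | hql
  · have hmono : a (l + 1 - σ p) < a (l + 1 - σ q) :=
      ha.strictMonoOn_Ioc ⟨by omega, by omega⟩ ⟨by omega, by omega⟩ (by omega)
    rw [al_apply_of_le hσq (by omega), al_apply_of_le hσp (by omega), ← neg_sub _ (σ q),
      ← neg_sub _ (σ p), map_neg ha.mem.1, map_neg ha.mem.1]
    exact neg_lt_neg hmono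
  · rw [al_apply_of_lt (by omega), al_apply_of_lt (by omega)]
    exact ha.strictMonoOn_Ioi (by grind) (by grind) hlt

lemma mul_al_mul_apply_neg_iff (ha : a ∈ young n 0) (hσ : σ ∈ young n l) (hp : 0 < p) :
    (a * al l * σ) p < 0 ↔ p ≤ l := by
  have hσp := (map_pos_iff (p := p) hσ).2 hp
  rw [Equiv.Perm.mul_apply, Equiv.Perm.mul_apply, map_neg_iff ha, ← map_le_iff hσ hp, al_apply]
  grind

lemma IsShuffle.noCancel_inv (hb : IsShuffle n l b) (hx : x ∈ hyperoctahedral n)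
    (h : ∀ p, 0 < p → (x p < 0 ↔ p ≤ l)) : NoCancel x b⁻¹ := by
  refine noCancel_of_mem_young hx (inv_mem hb.mem) fun p q hp hpq hlt => ?_
  have hp' := (map_pos_iff (inv_mem hb.mem)).2 hp
  have hq' := (map_pos_iff (inv_mem hb.mem)).2 (hp.trans hpq)
  have hql : b⁻¹ q ≤ l := by
    by_contra! hc
    have := hb.strictMonoOn_Ioi hc (hc.trans hlt) hlt
    rw [apply_inv_self, apply_inv_self] at this
    omega
  have hlp : l < b⁻¹ p := by
    by_contra! hc
    have := hb.strictMonoOn_Ioc ⟨hq', hlt.le.trans hc⟩ ⟨hp', hc⟩ hlt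
    rw [apply_inv_self, apply_inv_self] at this
    omega
  have := h _ hp'
  have := h _ hq'
  omega

theorem len_mul_al_mul_mul_inv (hl : l ≤ n) (ha : IsShuffle n l a) (hb : IsShuffle n l b)
    (hσ : σ ∈ young n l) :
    len n (a * al l * σ * b⁻¹) = len n a + len n (al l) + len n σ + len n b := by
  have hal := mul_mem ha.mem.1 (al_mem hl)
  have hx := mul_mem hal hσ.1
  rw [(hb.noCancel_inv hx fun p hp => mul_al_mul_apply_neg_iff ha.mem hσ hp).len_mul hx
      (inv_mem hb.mem.1), (ha.noCancel_mul_al hl hσ).len_mul hal hσ.1,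
    (noCancel_al ha.mem l).len_mul ha.mem.1 (al_mem hl), len_inv hb.mem.1]

lemma al_mul_inv_mul_mul_mem_young (hw : w ∈ hyperoctahedral n) (hl : l ≤ n)
    (ha : a ∈ young n 0) (hb : b ∈ young n 0) (haw : ∀ p, 0 < p → (w⁻¹ (a p) < 0 ↔ p ≤ l))
    (hbw : ∀ p, 0 < p → (w (b p) < 0 ↔ p ≤ l)) : al l * a⁻¹ * w * b ∈ young n l := by
  have hmem := mul_mem (mul_mem (mul_mem (al_mem hl) (inv_mem ha.1)) hw) hb.1
  refine ⟨hmem, fun p hp => ?_⟩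
  simp only [Equiv.Perm.mul_apply]
  have hbp := (map_pos_iff hb).2 hp
  have hwbp := hbw p hp
  rcases le_or_gt p l with hpl | hpl
  · have hk : 0 < -a⁻¹ (w (b p)) := by
      rw [neg_pos, map_neg_iff (inv_mem ha)]
      exact hwbp.2 hpl
    have hkl := haw _ hk
    rw [map_neg ha.1, apply_inv_self, map_neg (inv_mem hw), inv_apply_self] at hkl
    rw [al_apply]
    grind
  · have hk : 0 < a⁻¹ (w (b p)) := by
      have := map_eq_zero_iff (p := b p) hw
      rw [map_pos_iff (inv_mem ha)]
      omega
    have hkl := haw _ hk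
    rw [apply_inv_self, inv_apply_self] at hkl
    rw [al_apply_of_lt (by omega)]
    omega

theorem exists_isDecomp (hw : w ∈ hyperoctahedral n) (hl : (negs w).ncard = l)
    (hb : b ∈ Yset n l) (hbw : ∀ p, 0 < p → (w (b p) < 0 ↔ p ≤ l)) :
    ∃ a σ, IsDecomp n l w a σ b := by
  have hln : l ≤ n := hl ▸ ncard_negs_le hw
  obtain ⟨a, ha, haw⟩ := exists_mem_Yset (inv_mem hw)
  rw [ncard_negs_inv hw, hl] at ha haw
  have ha' := isShuffle_of_mem_Yset ha
  have hb' := isShuffle_of_mem_Yset hb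
  have hσ := al_mul_inv_mul_mul_mem_young hw hln ha'.mem hb'.mem haw hbw
  have hfactor : w = a * al l * (al l * a⁻¹ * w * b) * b⁻¹ := by
    nth_rw 2 [← al_inv]
    group
  refine ⟨a, _, ha, hb, by rwa [SymLR_eq_young], hfactor, ?_⟩
  rw [← len_mul_al_mul_mul_inv hln ha' hb' hσ, ← hfactor]

/-! ### Knuth classes of the decomposition -/

lemma filter_word_inv_eq {f : ℤ → Bool} {u : List ℤ} (ha : a ∈ young n 0)
    (hmono : StrictMonoOn a {p | 0 < p ∧ f p}) (hu : u.Pairwise (· < ·))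
    (hmem : ∀ p, p ∈ u ↔ 0 < p ∧ p ≤ n ∧ f p) : (word n ⇑a⁻¹).filter f = u := by
  refine List.Pairwise.eq_of_mem_iff (List.pairwise_filter.2 (pairwise_word ?_)) hu fun p => ?_
  · intro p q hp hpq _ hfp hfq
    refine (hmono.lt_iff_lt ⟨(map_pos_iff (inv_mem ha)).2 hp, hfp⟩
      ⟨(map_pos_iff (inv_mem ha)).2 (hp.trans hpq), hfq⟩).1 ?_
    rwa [apply_inv_self, apply_inv_self]
  · rw [List.mem_filter, mem_word, hmem, ← and_assoc]
    refine and_congr_left fun _ => ⟨?_, fun ⟨hp, hpn⟩ => ⟨a p, ?_, ?_, inv_apply_self a p⟩⟩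
    · rintro ⟨q, hq, hqn, rfl⟩
      have hpos := (map_pos_iff (inv_mem ha)).2 hq
      exact ⟨hpos, le_of_abs_le (abs_map_le (inv_mem ha.1) (by rwa [abs_of_pos hq]))⟩
    · exact (map_pos_iff ha).2 hp
    · exact le_of_abs_le (abs_map_le ha.1 (by rwa [abs_of_pos hp]))

lemma IsShuffle.filter_word_inv_le (ha : IsShuffle n l a) (hl : l ≤ n) :
    (word n ⇑a⁻¹).filter (· ≤ (l : ℤ)) = word l id := by
  refine filter_word_inv_eq ha.mem ?_ (pairwise_word fun _ _ _ h _ => h) fun p => ?_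
  · simpa using! ha.strictMonoOn_Ioc
  · simp only [mem_word, id, decide_eq_true_eq]
    grind

lemma IsShuffle.filter_word_inv_lt (ha : IsShuffle n l a) (hl : l ≤ n) :
    (word n ⇑a⁻¹).filter ((l : ℤ) < ·) = word (n - l) (fun p => l + p) := by
  refine filter_word_inv_eq ha.mem ?_ (pairwise_word fun _ _ _ h _ => by omega) fun p => ?_
  · exact ha.strictMonoOn_Ioi.mono fun p hp => by simpa using hp.2
  · simp only [mem_word, decide_eq_true_eq]
    exact ⟨by rintro ⟨q, hq, hqn, rfl⟩; omega, fun h => ⟨p - l, by omega, by omega, by omega⟩⟩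

/-- The word of `σ` on `1, …, l`. -/
abbrev lowerBlock (l : ℕ) (σ : P) : List ℤ := word l σ

/-- The word of `σ` on `l + 1, …, n`. -/
abbrev upperBlock (n l : ℕ) (σ : P) : List ℤ := word (n - l) (fun p => σ (l + p))

lemma pos_and_le_of_mem_lowerBlock (hσ : σ ∈ young n l) (hp : p ∈ lowerBlock l σ) :
    0 < p ∧ p ≤ l := by
  obtain ⟨q, hq, hql, rfl⟩ := mem_word.1 hp
  exact ⟨(map_pos_iff hσ).2 hq, (map_le_iff hσ hq).2 hql⟩

lemma lt_of_mem_upperBlock (hσ : σ ∈ young n l) (hp : p ∈ upperBlock n l σ) : l < p := by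
  obtain ⟨q, hq, -, rfl⟩ := mem_word.1 hp
  have := map_le_iff (p := l + q) hσ (by omega)
  omega

theorem knuthRel_iff_of_mem_young {τ : P} (hl : l ≤ n) (hσ : σ ∈ young n l) (hτ : τ ∈ young n l) :
    knuthRel n σ τ ↔ KnuthEquiv (lowerBlock l σ⁻¹) (lowerBlock l τ⁻¹) ∧
      KnuthEquiv (upperBlock n l σ⁻¹) (upperBlock n l τ⁻¹) := by
  have hpos : ∀ {ρ : P}, ρ ∈ young n l → ∀ p ∈ word n ⇑ρ⁻¹, 0 < p := fun hρ p hp => by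
    obtain ⟨q, hq, -, rfl⟩ := mem_word.1 hp
    exact (map_pos_iff (inv_mem hρ)).2 hq
  rw [knuthRel_iff_signedEquiv hσ.1 hτ.1, signedEquiv_iff_of_pos (hpos hσ) (hpos hτ)]
  obtain ⟨m, rfl⟩ := Nat.exists_eq_add_of_le hl
  rw [upperBlock, upperBlock, Nat.add_sub_cancel_left, word_add, word_add]
  have hσ' := inv_mem hσ
  have hτ' := inv_mem hτ
  refine knuthEquiv_append_iff (t := (l : ℤ)) (fun p hp => (pos_and_le_of_mem_lowerBlock hσ' hp).2)
    (fun p hp => lt_of_mem_upperBlock hσ' ?_) (fun p hp => (pos_and_le_of_mem_lowerBlock hτ' hp).2)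
    (fun p hp => lt_of_mem_upperBlock hτ' ?_)
  · rwa [upperBlock, Nat.add_sub_cancel_left]
  · rwa [upperBlock, Nat.add_sub_cancel_left]

lemma mul_inv_al_apply_neg_iff (hb : b ∈ young n 0) (hσ : σ ∈ young n l) (hp : 0 < p) :
    b (σ⁻¹ (al l p)) < 0 ↔ p ≤ l := by
  rw [map_neg_iff hb, map_neg_iff (inv_mem hσ), al_apply]
  grind

lemma filter_word_factor (ha : a ∈ young n 0) (f f' : ℤ → Bool)
    (h : ∀ p : ℤ, 0 < p → f (b (σ⁻¹ (al l p))) = f' p) :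
    (word n ⇑(a * al l * σ * b⁻¹)⁻¹).filter f =
      ((word n ⇑a⁻¹).filter f').map fun p => b (σ⁻¹ (al l p)) := by
  have hfactor : ⇑(a * al l * σ * b⁻¹)⁻¹ = (fun p => b (σ⁻¹ (al l p))) ∘ ⇑a⁻¹ := by
    simp only [mul_inv_rev, inv_inv, al_inv]
    rfl
  rw [hfactor, ← map_word, List.filter_map]
  congr 1
  refine List.filter_congr fun p hp => ?_
  obtain ⟨q, hq, -, rfl⟩ := mem_word.1 hp
  exact h _ ((map_pos_iff (inv_mem ha)).2 hq)

lemma filter_neg_word (hl : l ≤ n) (ha : IsShuffle n l a) (hb : b ∈ young n 0)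
    (hσ : σ ∈ young n l) : (word n ⇑(a * al l * σ * b⁻¹)⁻¹).filter (· < 0) =
      (((lowerBlock l σ⁻¹).map b).reverse).map Neg.neg := by
  rw [filter_word_factor ha.mem _ (· ≤ (l : ℤ)) fun p hp =>
    decide_eq_decide.2 (mul_inv_al_apply_neg_iff hb hσ hp), ha.filter_word_inv_le hl,
    map_word, map_word, reverse_word, map_word, word_eq_word_iff]
  intro p hp hpl
  simp only [Function.comp_apply, id]
  rw [al_apply_of_le hp hpl, ← neg_sub, map_neg (inv_mem hσ.1), map_neg hb.1]

lemma filter_pos_word (hl : l ≤ n) (ha : IsShuffle n l a) (hb : b ∈ young n 0)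
    (hσ : σ ∈ young n l) : (word n ⇑(a * al l * σ * b⁻¹)⁻¹).filter (0 < ·) =
      (upperBlock n l σ⁻¹).map b := by
  have hsign : ∀ p : ℤ, 0 < p → (0 < b (σ⁻¹ (al l p)) ↔ l < p) := fun p hp => by
    rw [map_pos_iff hb, map_pos_iff (inv_mem hσ), al_apply]
    grind
  rw [filter_word_factor ha.mem _ ((l : ℤ) < ·) fun p hp => decide_eq_decide.2 (hsign p hp),
    ha.filter_word_inv_lt hl, map_word, map_word, word_eq_word_iff]
  intro p hp _
  simp only [Function.comp_apply]
  rw [al_apply_of_lt (by omega)]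

lemma knuthEquiv_reverse_map_neg_iff {u v : List ℤ} :
    KnuthEquiv (u.reverse.map Neg.neg) (v.reverse.map Neg.neg) ↔ KnuthEquiv u v := by
  refine ⟨fun h => ?_, .reverse_map fun _ _ => neg_lt_neg⟩
  simpa [← List.map_reverse] using KnuthEquiv.reverse_map (fun _ _ => neg_lt_neg) h

lemma word_inv_ne_zero (hw : w ∈ hyperoctahedral n) : ∀ p ∈ word n ⇑w⁻¹, p ≠ 0 := fun p hp => by
  obtain ⟨q, hq, -, rfl⟩ := mem_word.1 hp
  exact (map_eq_zero_iff (inv_mem hw)).not.2 hq.ne'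

theorem knuthRel_iff_of_isDecomp {a' σ' : P} (hw : w ∈ Wset n) (hx : x ∈ Wset n) (hl : l ≤ n)
    (h : IsDecomp n l w a σ b) (h' : IsDecomp n l x a' σ' b) :
    knuthRel n w x ↔ knuthRel n σ σ' := by
  obtain ⟨ha, hb, hσ, rfl, -⟩ := h
  obtain ⟨ha', -, hσ', rfl, -⟩ := h'
  rw [SymLR_eq_young] at hσ hσ'
  replace ha := isShuffle_of_mem_Yset ha
  replace ha' := isShuffle_of_mem_Yset ha'
  replace hb := isShuffle_of_mem_Yset hb
  rw [knuthRel_iff_signedEquiv hw hx, signedEquiv_iff (word_inv_ne_zero hw) (word_inv_ne_zero hx),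
    filter_neg_word hl ha hb.mem hσ, filter_neg_word hl ha' hb.mem hσ',
    filter_pos_word hl ha hb.mem hσ, filter_pos_word hl ha' hb.mem hσ',
    knuthEquiv_reverse_map_neg_iff, knuthRel_iff_of_mem_young hl hσ hσ',
    knuthEquiv_map_iff hb.strictMonoOn_Ioc
      (fun p => pos_and_le_of_mem_lowerBlock (inv_mem hσ))
      (fun p => pos_and_le_of_mem_lowerBlock (inv_mem hσ')),
    knuthEquiv_map_iff hb.strictMonoOn_Ioi (fun p => lt_of_mem_upperBlock (inv_mem hσ))
      (fun p => lt_of_mem_upperBlock (inv_mem hσ'))]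

lemma mem_negs_iff (hw : w ∈ hyperoctahedral n) : p ∈ negs w ↔ 0 < p ∧ -p ∈ word n ⇑w⁻¹ := by
  refine and_congr_right fun hp => ?_
  rw [mem_word]
  constructor
  · intro h
    have := abs_le.1 (abs_map_le hw (p := p) (by
      rw [abs_of_pos hp]
      exact (negs_subset hw ⟨hp, h⟩).2))
    exact ⟨-w p, by omega, by omega, by rw [map_neg (inv_mem hw), inv_apply_self]⟩
  · rintro ⟨q, hq, -, h⟩
    rw [← neg_eq_iff_eq_neg.2 h, map_neg hw, apply_inv_self]
    omega

lemma negs_eq_of_knuthRel (hw : w ∈ Wset n) (hx : x ∈ Wset n) (h : knuthRel n w x) :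
    negs w = negs x := by
  rw [knuthRel_iff_signedEquiv hw hx,
    signedEquiv_iff (word_inv_ne_zero hw) (word_inv_ne_zero hx)] at h
  ext p
  have hperm := h.1.perm.mem_iff (a := -p)
  simp only [List.mem_filter, decide_eq_true_eq, Left.neg_neg_iff] at hperm
  rw [mem_negs_iff hw, mem_negs_iff hx, and_comm, hperm, and_comm]

theorem exists_isDecomp_pair (hw : w ∈ Wset n) (hx : x ∈ Wset n) (h : negs w = negs x) :
    ∃ b a σ a' σ', IsDecomp n (negs w).ncard w a σ b ∧ IsDecomp n (negs w).ncard x a' σ' b := by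
  obtain ⟨b, hb, hbw⟩ := exists_mem_Yset hw
  have hS := (isShuffle_of_mem_Yset hb).mem
  have hbx : ∀ p, 0 < p → (x (b p) < 0 ↔ p ≤ (negs w).ncard) := fun p hp => by
    have hbp := (map_pos_iff hS).2 hp
    have : b p ∈ negs w ↔ b p ∈ negs x := by rw [h]
    rw [← hbw p hp]
    exact (this.trans (and_iff_right hbp)).symm.trans (and_iff_right hbp)
  obtain ⟨a, σ, hd⟩ := exists_isDecomp hw rfl hb hbw
  obtain ⟨a', σ', hd'⟩ := exists_isDecomp hx (by rw [h]) hb hbx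
  exact ⟨b, a, σ, a', σ', hd, hd'⟩

end SignedPerm

open SignedPerm

/-- For `w, w' ∈ W_n`, the relations `w ↔_L w'` and `w ⇝_L w'`
are equivalent. -/
theorem knuth_iff_squig (n : ℕ) (hn : 1 ≤ n) (w w' : P)
    (hw : w ∈ Wset n) (hw' : w' ∈ Wset n) :
    knuthRel n w w' ↔ squig n w w' := by
  constructor
  · intro h
    have hnegs := negs_eq_of_knuthRel hw hw' h
    obtain ⟨b, a, σ, a', σ', hd, hd'⟩ := exists_isDecomp_pair hw hw' hnegs
    exact ⟨_, a, σ, b, a', σ', tlen_eq_ncard_negs hw, hnegs ▸ tlen_eq_ncard_negs hw', hd, hd',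
      (knuthRel_iff_of_isDecomp hw hw' (ncard_negs_le hw) hd hd').1 h⟩
  · rintro ⟨_, a, σ, b, a', σ', rfl, -, hd, hd', h⟩
    have hl : tlen n w ≤ n := (tlen_eq_ncard_negs hw).trans_le (ncard_negs_le hw)
    exact (knuthRel_iff_of_isDecomp hw hw' hl hd hd').2 h
end
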